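/- arXiv:1504.03026 — 7 statements merged into one kernel-verified Lean document; each statement's English description precedes it below -/
import Mathlib

section
/- A balanced graph function β on a strongly connected directed graph G is the unique balanced graph function in its equivalence class if and only if, for every real number w, the subgraph G_β^w is strongly connected. -/
open Filter Topology

variable {V : Type*}

/-- Maximum weight of an edge leaving `v` (as a supremum over the finite edge set). -/
noncomputable def outMax (E : V → V → Prop) (α : V → V → ℝ) (v : V) : ℝ :=
  sSup {x : ℝ | ∃ w, E v w ∧ x = α v w}

/-- Maximum weight of an edge entering `v`. -/
noncomputable def inMax (E : V → V → Prop) (α : V → V → ℝ) (v : V) : ℝ :=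
  sSup {x : ℝ | ∃ u, E u v ∧ x = α u v}

/-- A graph function is balanced if the max outgoing weight equals the max incoming
weight at every vertex. -/
def IsBalancedGF (E : V → V → Prop) (α : V → V → ℝ) : Prop :=
  ∀ v, outMax E α v = inMax E α v

/-- Raising imbalance at `v`. -/
noncomputable def rhoR (E : V → V → Prop) (α : V → V → ℝ) (v : V) : ℝ :=
  max 0 (outMax E α v - inMax E α v)

/-- Lowering imbalance at `v`. -/
noncomputable def rhoL (E : V → V → Prop) (α : V → V → ℝ) (v : V) : ℝ :=
  max 0 (inMax E α v - outMax E α v)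

/-- A balancing operation at `v`: add `(α_v^out − α_v^in)/2` to every edge entering `v`
and subtract the same quantity from every edge leaving `v` (a self-loop is unchanged). -/
noncomputable def balanceAt [DecidableEq V] (E : V → V → Prop) (α : V → V → ℝ) (v : V) :
    V → V → ℝ :=
  fun a b =>
    α a b + (if b = v then (outMax E α v - inMax E α v) / 2 else 0)
          - (if a = v then (outMax E α v - inMax E α v) / 2 else 0)

/-- A raising operation at `v`: balance at `v` if the raising imbalance is positive,
otherwise do nothing. -/
noncomputable def raiseOp [DecidableEq V] (E : V → V → Prop) (α : V → V → ℝ) (v : V) :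
    V → V → ℝ :=
  if 0 < rhoR E α v then balanceAt E α v else α

/-- A lowering operation at `v`: balance at `v` if the lowering imbalance is positive,
otherwise do nothing. -/
noncomputable def lowerOp [DecidableEq V] (E : V → V → Prop) (α : V → V → ℝ) (v : V) :
    V → V → ℝ :=
  if 0 < rhoL E α v then balanceAt E α v else α

/-- A sequence of vertices is fair if every vertex appears infinitely often. -/
def Fair (σ : ℕ → V) : Prop := ∀ (v : V) (N : ℕ), ∃ t, N ≤ t ∧ σ t = v

/-- State after `t` raising operations along the sequence `σ`. -/
noncomputable def raiseIter [DecidableEq V] (E : V → V → Prop) (α : V → V → ℝ)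
    (σ : ℕ → V) : ℕ → V → V → ℝ
  | 0 => α
  | t + 1 => raiseOp E (raiseIter E α σ t) (σ t)

/-- State after `t` lowering operations along the sequence `σ`. -/
noncomputable def lowerIter [DecidableEq V] (E : V → V → Prop) (α : V → V → ℝ)
    (σ : ℕ → V) : ℕ → V → V → ℝ
  | 0 => α
  | t + 1 => lowerOp E (lowerIter E α σ t) (σ t)

/-- The raising vector: cumulative amount by which each vertex has been raised after
`t` raising operations along `σ`. -/
noncomputable def rvec [DecidableEq V] (E : V → V → Prop) (α : V → V → ℝ)
    (σ : ℕ → V) : ℕ → V → ℝ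
  | 0 => fun _ => 0
  | t + 1 => fun u =>
      rvec E α σ t u + (if u = σ t then rhoR E (raiseIter E α σ t) (σ t) / 2 else 0)

/-- State after performing raising operations along a finite list of vertices. -/
noncomputable def raiseList [DecidableEq V] (E : V → V → Prop) :
    (V → V → ℝ) → List V → V → V → ℝ
  | α, [] => α
  | α, v :: l => raiseList E (raiseOp E α v) l

/-- Raising vector accumulated along a finite list of raising operations. -/
noncomputable def rvecList [DecidableEq V] (E : V → V → Prop) :
    (V → V → ℝ) → List V → V → ℝ
  | _, [] => fun _ => 0
  | α, v :: l => fun u =>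
      (if u = v then rhoR E α v / 2 else 0) + rvecList E (raiseOp E α v) l u

/-- State after performing (unconditional) balancing operations along a list. -/
noncomputable def balList [DecidableEq V] (E : V → V → Prop) :
    (V → V → ℝ) → List V → V → V → ℝ
  | α, [] => α
  | α, v :: l => balList E (balanceAt E α v) l

/-- State after `t` balancing operations along the sequence `σ`. -/
noncomputable def balIter [DecidableEq V] (E : V → V → Prop) (α : V → V → ℝ)
    (σ : ℕ → V) : ℕ → V → V → ℝ
  | 0 => α
  | t + 1 => balanceAt E (balIter E α σ t) (σ t)

/-- Two graph functions are equivalent if their sums around every directed cycle agree. -/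
def Equivalent (E : V → V → Prop) (α γ : V → V → ℝ) : Prop :=
  ∀ (k : ℕ) (f : ZMod (k + 1) → V), (∀ i, E (f i) (f (i + 1))) →
    (∑ i, α (f i) (f (i + 1))) = ∑ i, γ (f i) (f (i + 1))

/-- The raising-balanced graph function determined by the limiting raising vector. -/
noncomputable def alphaR (α : V → V → ℝ) (rstar : V → ℝ) : V → V → ℝ :=
  fun u v => α u v + rstar v - rstar u

/-- Height of a vertex: `y_v = -r*_v`. -/
noncomputable def height (rstar : V → ℝ) (v : V) : ℝ := -rstar v

/-- Level of a vertex: maximum over incoming edges of `α^R`. -/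
noncomputable def level (E : V → V → Prop) (α : V → V → ℝ) (rstar : V → ℝ) (v : V) : ℝ :=
  inMax E (alphaR α rstar) v

/-- Momentum of a vertex: `m_v = max over edges (u,v) entering v of (α_{uv} − x_v)`. -/
noncomputable def momentum (E : V → V → Prop) (α : V → V → ℝ) (rstar : V → ℝ) (v : V) : ℝ :=
  sSup {c : ℝ | ∃ u, E u v ∧ c = α u v - level E α rstar v}

/-- The subgraph of edges of weight at least `w` (with isolated vertices removed)
is strongly connected: any two non-isolated vertices of the subgraph are joined by a
directed path using only edges of weight at least `w`. -/
def SCThreshold (E : V → V → Prop) (β : V → V → ℝ) (w : ℝ) : Prop :=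
  ∀ a b : V,
    (∃ c, (E a c ∧ w ≤ β a c) ∨ (E c a ∧ w ≤ β c a)) →
    (∃ c, (E b c ∧ w ≤ β b c) ∨ (E c b ∧ w ≤ β c b)) →
    Relation.ReflTransGen (fun p q => E p q ∧ w ≤ β p q) a b

section Helpers

lemma outMax_ge [Finite V] {E : V → V → Prop} (α : V → V → ℝ) {v w : V} (h : E v w) :
    α v w ≤ outMax E α v := by
  apply le_csSup
  · apply Set.Finite.bddAbove
    apply (Set.finite_range (fun w => α v w)).subset
    rintro x ⟨w, _, rfl⟩
    exact ⟨w, rfl⟩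
  · exact ⟨w, h, rfl⟩

lemma outMax_att [Finite V] {E : V → V → Prop} (α : V → V → ℝ) {v : V} (h : ∃ w, E v w) :
    ∃ w, E v w ∧ outMax E α v = α v w := by
  have hf : {x : ℝ | ∃ w, E v w ∧ x = α v w}.Finite := by
    apply (Set.finite_range (fun w => α v w)).subset
    rintro x ⟨w, _, rfl⟩
    exact ⟨w, rfl⟩
  obtain ⟨w, hw⟩ := h
  have hn : {x : ℝ | ∃ w, E v w ∧ x = α v w}.Nonempty := ⟨_, w, hw, rfl⟩
  exact hn.csSup_mem hf

lemma inMax_ge [Finite V] {E : V → V → Prop} (α : V → V → ℝ) {v w : V} (h : E w v) :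
    α w v ≤ inMax E α v :=
  outMax_ge (E := flip E) (flip α) h

lemma inMax_att [Finite V] {E : V → V → Prop} (α : V → V → ℝ) {v : V} (h : ∃ w, E w v) :
    ∃ w, E w v ∧ inMax E α v = α w v :=
  outMax_att (E := flip E) (flip α) h

lemma bal_flip {E : V → V → Prop} {α : V → V → ℝ} (h : IsBalancedGF E α) :
    IsBalancedGF (flip E) (flip α) := fun v => (h v).symm

lemma sc_flip {E : V → V → Prop} {α : V → V → ℝ} {w : ℝ} (h : SCThreshold E α w) :
    SCThreshold (flip E) (flip α) w := by
  rintro a b ⟨c, hc⟩ ⟨d, hd⟩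
  exact (h b a ⟨d, hd.symm⟩ ⟨c, hc.symm⟩).swap

lemma crossing {R : V → V → Prop} {P : V → Prop} {a b : V} (h : Relation.ReflTransGen R a b)
    (ha : ¬ P a) (hb : P b) : ∃ p q, R p q ∧ ¬ P p ∧ P q := by
  induction h with
  | refl => exact absurd hb ha
  | @tail c d _ hcd ih =>
    by_cases hc : P c
    · exact ih hc
    · exact ⟨c, d, hcd, hc, hb⟩

lemma caseM [Finite V] {E : V → V → Prop} (hout : ∀ v, ∃ w, E v w)
    {β γ : V → V → ℝ} {r : V → ℝ} {w : ℝ} (hγ : IsBalancedGF E γ)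
    (hr : ∀ u v, E u v → γ u v = β u v + r v - r u)
    {p q : V} (hpq : E p q) (hw : w ≤ β p q) (hlt : r p < r q)
    (hM : ∀ v c, ((E v c ∧ w ≤ β v c) ∨ (E c v ∧ w ≤ β c v)) → r v ≤ r q)
    (hC : ∀ v c, E v c → w < β v c → r v ≠ r q) : False := by
  have hq : q ∈ {v | r q ≤ r v ∧ w < inMax E γ v} := by
    refine ⟨le_rfl, ?_⟩
    have := inMax_ge γ hpq
    rw [hr p q hpq] at this
    linarith
  obtain ⟨v, ⟨hv1, hv2⟩, hmax⟩ :=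
    Set.exists_max_image {v | r q ≤ r v ∧ w < inMax E γ v} r (Set.toFinite _) ⟨q, hq⟩
  obtain ⟨v', hE, hv'⟩ := outMax_att γ (hout v)
  rw [← hγ v, hv'] at hv2
  have hb : β v v' ≤ w := by
    by_contra hcon
    push Not at hcon
    exact hC v v' hE hcon (le_antisymm (hM v v' (Or.inl ⟨hE, hcon.le⟩)) hv1)
  have h1 := hr v v' hE
  have h2 : v' ∈ {v | r q ≤ r v ∧ w < inMax E γ v} :=
    ⟨by linarith, lt_of_lt_of_le hv2 (inMax_ge γ hE)⟩
  have := hmax v' h2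
  linarith

/-- walk sums -/
inductive WalkSum (E : V → V → Prop) (δ : V → V → ℝ) : V → V → ℝ → Prop
  | refl (u : V) : WalkSum E δ u u 0
  | tail {u v w : V} {x : ℝ} : WalkSum E δ u v x → E v w → WalkSum E δ u w (x + δ v w)

lemma WalkSum.trans {E : V → V → Prop} {δ : V → V → ℝ} {u v w : V} {x y : ℝ}
    (h1 : WalkSum E δ u v x) (h2 : WalkSum E δ v w y) : WalkSum E δ u w (x + y) := by
  induction h2 with
  | refl => simpa using h1
  | tail _ hE ih => rw [← add_assoc]; exact ih.tail hE

lemma WalkSum.exists {E : V → V → Prop} (δ : V → V → ℝ) {u v : V}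
    (h : Relation.ReflTransGen E u v) : ∃ x, WalkSum E δ u v x := by
  induction h with
  | refl => exact ⟨0, .refl u⟩
  | tail _ hE ih => obtain ⟨x, hx⟩ := ih; exact ⟨_, hx.tail hE⟩

lemma WalkSum.fn {E : V → V → Prop} {δ : V → V → ℝ} {u v : V} {x : ℝ}
    (h : WalkSum E δ u v x) : ∃ (n : ℕ) (f : ℕ → V), f 0 = u ∧ f n = v ∧
      (∀ i < n, E (f i) (f (i + 1))) ∧ x = ∑ i ∈ Finset.range n, δ (f i) (f (i + 1)) := by
  induction h with
  | refl => exact ⟨0, fun _ => u, rfl, rfl, by simp, by simp⟩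
  | @tail v w x _ hE ih =>
    obtain ⟨n, f, h0, hn, hf, hx⟩ := ih
    refine ⟨n + 1, fun i => if i ≤ n then f i else w, by simp [h0], by simp, ?_, ?_⟩
    · intro i hi
      rcases Nat.lt_succ_iff_lt_or_eq.mp hi with h | h
      · have h1 : i ≤ n := h.le
        have h2 : i + 1 ≤ n := h
        simpa [h1, h2] using hf i h
      · subst h; simpa [hn] using hE
    · rw [Finset.sum_range_succ, hx]
      congr 1
      · apply Finset.sum_congr rfl
        intro i hi
        have h : i < n := Finset.mem_range.mp hi
        have h1 : i ≤ n := h.le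
        have h2 : i + 1 ≤ n := h
        simp [h1, h2]
      · simp [hn]

lemma WalkSum.closed {E : V → V → Prop} {β γ : V → V → ℝ} (he : Equivalent E β γ) {u : V} {x : ℝ}
    (h : WalkSum E (fun a b => γ a b - β a b) u u x) : x = 0 := by
  obtain ⟨n, f, h0, hn, hf, hx⟩ := h.fn
  cases n with
  | zero => simpa using hx
  | succ k =>
    let g : Fin (k + 1) → V := fun i => f i.val
    have hg : ∀ i : Fin (k + 1), g (i + 1) = f (i.val + 1) := by
      intro i
      simp only [g]
      by_cases hi : i = Fin.last k
      · subst hi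
        simp [h0, hn]
      · rw [Fin.val_add_one_of_lt (Fin.lt_last_iff_ne_last.mpr hi)]
    have := he k g (by
      intro i
      have h1 := hf (Fin.val i) (Fin.is_lt i)
      have h2 := hg i
      rw [← h2] at h1
      exact h1)
    have h3 : (∑ i : Fin (k + 1), β (g i) (g (i + 1))) = ∑ i : Fin (k + 1), γ (g i) (g (i + 1)) := this
    rw [hx, Finset.sum_range, Finset.sum_sub_distrib]
    simp only [hg] at h3
    simp only [g] at h3
    linarith

lemma potential [Nonempty V] {E : V → V → Prop} (hconn : ∀ u v : V, Relation.ReflTransGen E u v)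
    {β γ : V → V → ℝ} (he : Equivalent E β γ) :
    ∃ r : V → ℝ, ∀ u v, E u v → γ u v = β u v + r v - r u := by
  obtain ⟨o⟩ := ‹Nonempty V›
  choose r hr using fun v => WalkSum.exists (fun a b => γ a b - β a b) (hconn o v)
  refine ⟨r, fun u v hE => ?_⟩
  obtain ⟨y, hy⟩ := WalkSum.exists (fun a b => γ a b - β a b) (hconn v o)
  have h1 := ((hr v).trans hy).closed he
  have h2 := (((hr u).tail hE).trans hy).closed he
  linarith

lemma dir_back [Finite V] [Nonempty V] (E : V → V → Prop)
    (hout : ∀ v, ∃ w, E v w) (hin : ∀ v, ∃ u, E u v)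
    (hconn : ∀ u v : V, Relation.ReflTransGen E u v)
    (β : V → V → ℝ) (hsc : ∀ w : ℝ, SCThreshold E β w)
    (γ : V → V → ℝ) (hγ : IsBalancedGF E γ) (he : Equivalent E β γ) (u v : V) (huv : E u v) :
    γ u v = β u v := by
  obtain ⟨r, hr⟩ := potential hconn he
  by_contra hne
  have hD : (u, v) ∈ {e : V × V | E e.1 e.2 ∧ r e.1 ≠ r e.2} := by
    refine ⟨huv, fun h => hne ?_⟩
    rw [hr u v huv]
    simp only at h
    rw [h]; ring
  obtain ⟨⟨x, y⟩, ⟨hxy, hrxy⟩, hmax⟩ :=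
    Set.exists_max_image {e : V × V | E e.1 e.2 ∧ r e.1 ≠ r e.2} (fun e => β e.1 e.2)
      (Set.toFinite _) ⟨_, hD⟩
  simp only at hxy hrxy
  set w := β x y with hw
  have hK : ∀ a b, E a b → w < β a b → r a = r b := by
    intro a b hab hlt
    by_contra hcon
    exact absurd (hmax (a, b) ⟨hab, hcon⟩) (not_le.mpr hlt)
  let N : Set V := {v | ∃ c, (E v c ∧ w ≤ β v c) ∨ (E c v ∧ w ≤ β c v)}
  have hxN : x ∈ N := ⟨y, Or.inl ⟨hxy, le_rfl⟩⟩
  have hyN : y ∈ N := ⟨x, Or.inr ⟨hxy, le_rfl⟩⟩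
  obtain ⟨M, hMN, hM⟩ := Set.exists_max_image N r (Set.toFinite _) ⟨x, hxN⟩
  obtain ⟨m, hmN, hm⟩ := Set.exists_min_image N r (Set.toFinite _) ⟨x, hxN⟩
  have hlt : r m < r M := by
    have := hM x hxN
    have := hM y hyN
    have := hm x hxN
    have := hm y hyN
    rcases lt_or_gt_of_ne hrxy with h | h <;> linarith
  have hpath := hsc w m M hmN hMN
  by_cases hC : ∀ v c, E v c → w < β v c → r v ≠ r M
  · obtain ⟨p, q, ⟨hpq, hwpq⟩, hp, hq⟩ := crossing (P := fun v => r v = r M) hpath hlt.ne rfl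
    have hpN : p ∈ N := ⟨q, Or.inl ⟨hpq, hwpq⟩⟩
    have hp' := lt_of_le_of_ne (hM p hpN) hp
    refine caseM hout hγ hr hpq hwpq (by rw [hq]; exact hp') ?_ ?_
    · intro v c hvc; rw [hq]; exact hM v ⟨c, hvc⟩
    · rw [hq]; exact hC
  · push Not at hC
    obtain ⟨a, c, hac, hwac, hra⟩ := hC
    obtain ⟨p, q, ⟨hpq, hwpq⟩, hp, hq⟩ := crossing (P := fun v => r v ≠ r m) hpath
      (by simp) hlt.ne'
    simp only [ne_eq, not_not] at hp
    have hqN : q ∈ N := ⟨p, Or.inr ⟨hpq, hwpq⟩⟩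
    have hq' := lt_of_le_of_ne (hm q hqN) (Ne.symm hq)
    refine caseM (E := flip E) (β := flip β) (γ := flip γ) (r := fun v => - r v) (w := w)
      (p := q) (q := p) hin (bal_flip hγ) ?_ hpq hwpq (by linarith) ?_ ?_
    · intro u v h
      have := hr v u h
      simp only [flip]
      linarith
    · intro v c hvc
      have := hm v ⟨c, hvc.symm⟩
      linarith
    · intro v d hvd hwvd hcon
      have hrv : r v = r m := by linarith
      have hP := hsc (min (β a c) (β d v)) a v ⟨c, Or.inl ⟨hac, min_le_left _ _⟩⟩
        ⟨d, Or.inr ⟨hvd, min_le_right _ _⟩⟩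
      have hww : w < min (β a c) (β d v) := lt_min hwac hwvd
      have : r a = r v := by
        clear hcon hrv hvd
        generalize min (β a c) (β d v) = w' at hP hww
        clear hwvd
        induction hP with
        | refl => rfl
        | tail _ h ih => rw [ih]; exact hK _ _ h.1 (lt_of_lt_of_le hww h.2)
      linarith

/-- simultaneous balancing map on potentials -/
noncomputable def FF (E : V → V → Prop) (β : V → V → ℝ) (r : V → ℝ) (v : V) : ℝ :=
  r v + (outMax E (alphaR β r) v - inMax E (alphaR β r) v) / 2

lemma FF_mono [Finite V] {E : V → V → Prop} (hout : ∀ v, ∃ w, E v w) (hin : ∀ v, ∃ u, E u v)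
    (β : V → V → ℝ) {r s : V → ℝ} (h : ∀ v, r v ≤ s v) (v : V) : FF E β r v ≤ FF E β s v := by
  obtain ⟨a, ha, ha'⟩ := outMax_att (alphaR β r) (hout v)
  obtain ⟨b, hb, hb'⟩ := inMax_att (alphaR β s) (hin v)
  have h1 := outMax_ge (alphaR β s) ha
  have h2 := inMax_ge (alphaR β r) hb
  have h3 := h a
  have h4 := h b
  unfold FF
  rw [ha', hb']
  unfold alphaR at *
  linarith

lemma FF_flip (E : V → V → Prop) (β : V → V → ℝ) (r : V → ℝ) (v : V) :
    FF (flip E) (flip β) (fun x => - r x) v = - FF E β r v := by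
  have h : alphaR (flip β) (fun x => - r x) = flip (alphaR β r) := by
    funext a b
    simp only [alphaR, flip]; ring
  have h1 : outMax (flip E) (flip (alphaR β r)) v = inMax E (alphaR β r) v := rfl
  have h2 : inMax (flip E) (flip (alphaR β r)) v = outMax E (alphaR β r) v := rfl
  unfold FF
  rw [h, h1, h2]
  ring

lemma FF_const (E : V → V → Prop) (β : V → V → ℝ) (r : V → ℝ) (t : ℝ) (v : V) :
    FF E β (fun x => r x + t) v = FF E β r v + t := by
  have h : alphaR β (fun x => r x + t) = alphaR β r := by
    funext a b
    simp only [alphaR]; ring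
  unfold FF
  rw [h]
  ring

lemma FF_zero {E : V → V → Prop} {β : V → V → ℝ} (hβ : IsBalancedGF E β) (v : V) :
    FF E β (fun _ => 0) v = 0 := by
  have h : alphaR β (fun _ => 0) = β := by
    funext a b
    simp only [alphaR]; ring
  unfold FF
  rw [h, hβ v]
  ring

lemma source_set [Finite V] {E : V → V → Prop} (hout : ∀ v, ∃ w, E v w) (hin : ∀ v, ∃ u, E u v)
    {β : V → V → ℝ} (hβ : IsBalancedGF E β) {w : ℝ}
    (H : ∀ w', (∃ a b, E a b ∧ w ≤ β a b ∧ β a b < w') → SCThreshold E β w')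
    (b : V) (hb : ∃ c, (E b c ∧ w ≤ β b c) ∨ (E c b ∧ w ≤ β c b)) :
    ∃ S : Set V, S.Nonempty ∧
      (∀ s ∈ S, Relation.ReflTransGen (fun p q => E p q ∧ w ≤ β p q) s b) ∧
      ∀ t : ℝ, 0 < t → (∀ u v, E u v → β u v < w → t ≤ w - β u v) →
        ∀ v, S.indicator (fun _ => t) v ≤ FF E β (S.indicator fun _ => t) v := by
  set R : V → V → Prop := fun p q => E p q ∧ w ≤ β p q with hR
  have hinR : ∀ v, (∃ c, R v c ∨ R c v) → ∃ u, R u v := by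
    rintro v ⟨c, h | h⟩
    · obtain ⟨u, hu, hu'⟩ := inMax_att β (hin v)
      refine ⟨u, hu, ?_⟩
      rw [← hu', ← hβ v]
      exact h.2.trans (outMax_ge β h.1)
    · exact ⟨c, h⟩
  obtain ⟨b', hb', hmin⟩ := Set.exists_min_image {x | Relation.ReflTransGen R x b}
    (fun x => {y | Relation.ReflTransGen R y x}.ncard) (Set.toFinite _) ⟨b, .refl⟩
  simp only [Set.mem_ofPred_eq] at hb' hmin
  obtain ⟨u, hu⟩ : ∃ u, R u b' := by
    apply hinR
    rcases hb'.cases_head with h | ⟨c, hc, _⟩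
    · rw [h]; exact hb
    · exact ⟨c, Or.inl hc⟩
  have hsub : {y | Relation.ReflTransGen R y u} ⊆ {y | Relation.ReflTransGen R y b'} :=
    fun y hy => Relation.ReflTransGen.tail hy hu
  have heq := Set.eq_of_subset_of_ncard_le hsub (hmin u (hb'.head hu)) (Set.toFinite _)
  have hbu : Relation.ReflTransGen R b' u := by
    have : b' ∈ {y | Relation.ReflTransGen R y b'} := Relation.ReflTransGen.refl
    rw [← heq] at this
    exact this
  have hcyc : Relation.TransGen R b' b' := Relation.TransGen.tail' hbu hu
  refine ⟨{y | Relation.ReflTransGen R y b'}, ⟨b', .refl⟩, fun s hs => Relation.ReflTransGen.trans hs hb', ?_⟩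
  set S : Set V := {y | Relation.ReflTransGen R y b'} with hS
  have hSout : ∀ v ∈ S, ∃ c ∈ S, R v c := by
    intro v hv
    have h : Relation.TransGen R v b' := Relation.TransGen.trans_right hv hcyc
    obtain ⟨c, hc, hc'⟩ := Relation.TransGen.head'_iff.mp h
    exact ⟨c, hc', hc⟩
  have hSin : ∀ v ∈ S, ∀ u, R u v → u ∈ S := fun v hv u hu => Relation.ReflTransGen.head hu hv
  intro t ht hsmall v
  by_cases hv : v ∈ S
  · obtain ⟨c, hcS, hvc⟩ := hSout v hv
    have hoc : ∃ d ∈ S, E v d ∧ outMax E β v = β v d := by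
      obtain ⟨d, hd, hd'⟩ := outMax_att β (hout v)
      by_cases hdS : d ∈ S
      · exact ⟨d, hdS, hd, hd'⟩
      · refine ⟨c, hcS, hvc.1, le_antisymm ?_ (outMax_ge β hvc.1)⟩
        rw [hd']
        by_contra hcon
        push Not at hcon
        have hsc := H (β v d) ⟨v, c, hvc.1, hvc.2, hcon⟩ d v
          ⟨v, Or.inr ⟨hd, le_rfl⟩⟩ ⟨d, Or.inl ⟨hd, le_rfl⟩⟩
        apply hdS
        have : Relation.ReflTransGen R d v :=
          Relation.ReflTransGen.mono (fun p q h => ⟨h.1, hvc.2.trans (hcon.le.trans h.2)⟩) _ _ hsc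
        exact this.trans hv
    obtain ⟨d, hdS, hd, hd'⟩ := hoc
    obtain ⟨e, he, he'⟩ := inMax_att (alphaR β (S.indicator fun _ => t)) (hin v)
    have h1 := outMax_ge (alphaR β (S.indicator fun _ => t)) hd
    have h2 := inMax_ge β he
    have h3 := hβ v
    have h4 := outMax_ge β hvc.1
    have h5 : w ≤ β v c := hvc.2
    unfold FF
    rw [he']
    simp only [alphaR, Set.indicator_of_mem hv, Set.indicator_of_mem hdS] at h1 ⊢
    by_cases heS : e ∈ S
    · rw [Set.indicator_of_mem heS]
      linarith
    · rw [Set.indicator_of_notMem heS]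
      have hlt : β e v < w := by
        by_contra hcon
        push Not at hcon
        exact heS (hSin v hv e ⟨he, hcon⟩)
      have := hsmall e v he hlt
      linarith
  · rw [Set.indicator_of_notMem hv, ← FF_zero hβ v]
    apply FF_mono hout hin
    intro x
    exact Set.indicator_nonneg (fun _ _ => ht.le) x

lemma exists_fixed [Finite V] {E : V → V → Prop} (hout : ∀ v, ∃ w, E v w)
    (hin : ∀ v, ∃ u, E u v) (β : V → V → ℝ) {q p : V → ℝ} (hqp : q ≤ p)
    (hq : ∀ v, q v ≤ FF E β q v) (hp : ∀ v, FF E β p v ≤ p v) :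
    ∃ r, q ≤ r ∧ r ≤ p ∧ ∀ v, FF E β r v = r v := by
  have : Fact (q ≤ p) := ⟨hqp⟩
  let G : Set.Icc q p →o Set.Icc q p :=
    { toFun := fun r => ⟨FF E β r.1,
        fun v => (hq v).trans (FF_mono hout hin β r.2.1 v),
        fun v => (FF_mono hout hin β r.2.2 v).trans (hp v)⟩
      monotone' := fun r s h v => FF_mono hout hin β h v }
  have h := G.map_lfp
  refine ⟨(OrderHom.lfp G).1, (OrderHom.lfp G).2.1, (OrderHom.lfp G).2.2, fun v => ?_⟩
  exact congrFun (congrArg Subtype.val h) v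

lemma equiv_alphaR (E : V → V → Prop) (β : V → V → ℝ) (r : V → ℝ) :
    Equivalent E β (alphaR β r) := by
  intro k f _
  simp only [alphaR, add_sub_assoc, Finset.sum_add_distrib, Finset.sum_sub_distrib]
  have : ∑ i, r (f (i + 1)) = ∑ i, r (f i) :=
    Equiv.sum_comp (Equiv.addRight (1 : ZMod (k + 1))) (fun i => r (f i))
  rw [this]; ring

lemma dir_fwd [Finite V] [Nonempty V] (E : V → V → Prop)
    (hout : ∀ v, ∃ w, E v w) (hin : ∀ v, ∃ u, E u v)
    (hconn : ∀ u v : V, Relation.ReflTransGen E u v)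
    (β : V → V → ℝ) (hβ : IsBalancedGF E β)
    (hu : ∀ γ : V → V → ℝ, IsBalancedGF E γ → Equivalent E β γ →
      ∀ u v, E u v → γ u v = β u v) (w : ℝ) : SCThreshold E β w := by
  classical
  by_contra hw0
  obtain ⟨w, hw, hmin⟩ : ∃ w, ¬ SCThreshold E β w ∧ ∀ w', ¬ SCThreshold E β w' →
      {e : V × V | E e.1 e.2 ∧ w ≤ β e.1 e.2}.ncard ≤
        {e : V × V | E e.1 e.2 ∧ w' ≤ β e.1 e.2}.ncard := by
    obtain ⟨w, hw, h⟩ := exists_minimalFor_of_wellFoundedLT (fun w => ¬ SCThreshold E β w)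
      (fun w => {e : V × V | E e.1 e.2 ∧ w ≤ β e.1 e.2}.ncard) ⟨w, hw0⟩
    refine ⟨w, hw, fun w' hw' => ?_⟩
    rcases le_total ({e : V × V | E e.1 e.2 ∧ w ≤ β e.1 e.2}.ncard)
      ({e : V × V | E e.1 e.2 ∧ w' ≤ β e.1 e.2}.ncard) with h' | h'
    · exact h'
    · exact h hw' h'
  have H : ∀ w', (∃ a b, E a b ∧ w ≤ β a b ∧ β a b < w') → SCThreshold E β w' := by
    rintro w' ⟨a, b, hab, h1, h2⟩
    by_contra hcon
    refine absurd (hmin w' hcon) (not_le.mpr ?_)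
    apply Set.ncard_lt_ncard _ (Set.toFinite _)
    refine ⟨fun e he => ⟨he.1, (h1.trans h2.le).trans he.2⟩, fun hsub => ?_⟩
    have := hsub (show (a, b) ∈ {e : V × V | E e.1 e.2 ∧ w ≤ β e.1 e.2} from ⟨hab, h1⟩)
    exact absurd this.2 (not_le.mpr h2)
  unfold SCThreshold at hw
  push Not at hw
  obtain ⟨a, b, ha, hb, hnab⟩ := hw
  obtain ⟨S, ⟨s, hs⟩, hSb, hSF⟩ := source_set hout hin hβ H b hb
  obtain ⟨T, ⟨s', hs'⟩, hTa, hTF⟩ := source_set (E := flip E) (β := flip β) (w := w) hin hout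
    (bal_flip hβ) (fun w' ⟨x, y, h⟩ => sc_flip (H w' ⟨y, x, h⟩)) a
    (by obtain ⟨c, hc⟩ := ha; exact ⟨c, hc.symm⟩)
  have hdisj : ∀ x, x ∈ S → x ∈ T → False := by
    intro x hxS hxT
    exact hnab ((hTa x hxT).swap.trans (hSb x hxS))
  obtain ⟨t, ht, hts⟩ : ∃ t : ℝ, 0 < t ∧ ∀ u v, E u v → β u v < w → t ≤ w - β u v := by
    by_cases hne : {e : V × V | β e.1 e.2 < w}.Nonempty
    · obtain ⟨e, he, hmx⟩ := Set.exists_max_image {e : V × V | β e.1 e.2 < w}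
        (fun e => β e.1 e.2) (Set.toFinite _) hne
      refine ⟨w - β e.1 e.2, sub_pos.mpr he, fun u v _ h => ?_⟩
      have := hmx (u, v) h
      simp only at this
      linarith
    · exact ⟨1, one_pos, fun u v _ h => absurd ⟨(u, v), h⟩ hne⟩
  have hq := hSF t ht hts
  have hp := hTF t ht (fun u v h h' => hts v u h h')
  obtain ⟨r, hr1, hr2, hr⟩ := exists_fixed hout hin β
    (q := S.indicator fun _ => t) (p := fun x => - T.indicator (fun _ => t) x + t)
    (by
      intro x
      by_cases hxS : x ∈ S
      · have hxT : x ∉ T := fun h => hdisj x hxS h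
        simp [hxS, hxT]
      · by_cases hxT : x ∈ T <;> simp [hxS, hxT, ht.le])
    hq (by
      intro v
      rw [FF_const]
      have h1 := FF_flip E β (fun x => - T.indicator (fun _ => t) x) v
      simp only [neg_neg] at h1
      have h2 := hp v
      have h3 : FF (flip E) (flip β) (T.indicator fun _ => t) v =
        FF (flip E) (flip β) (fun x => T.indicator (fun _ => t) x) v := rfl
      linarith)
  have hbal : IsBalancedGF E (alphaR β r) := by
    intro v
    have := hr v
    unfold FF at this
    linarith
  have hedge : ∀ u v, E u v → r u = r v := by
    intro u v h
    have := hu _ hbal (equiv_alphaR E β r) u v h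
    simp only [alphaR] at this
    linarith
  have hconst : r s = r s' := by
    have key : ∀ x, Relation.ReflTransGen E s x → r s = r x := by
      intro x hx
      induction hx with
      | refl => rfl
      | tail _ h ih => rw [ih]; exact hedge _ _ h
    exact key s' (hconn s s')
  have h1 := hr1 s
  have h2 := hr2 s'
  simp [hs] at h1
  simp [hs'] at h2
  linarith

end Helpers

/-- A balanced graph function `β` on a strongly connected directed
graph is the unique balanced graph function in its equivalence class if and only if
`G_β^w` is strongly connected for every real `w`. -/
theorem unique_balance_iff_thresholds_strongly_connected
    [Fintype V] [Nonempty V] (E : V → V → Prop)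
    (hout : ∀ v, ∃ w, E v w) (hin : ∀ v, ∃ u, E u v)
    (hconn : ∀ u v : V, Relation.ReflTransGen E u v)
    (β : V → V → ℝ) (hβ : IsBalancedGF E β) :
    (∀ γ : V → V → ℝ, IsBalancedGF E γ → Equivalent E β γ →
      ∀ u v, E u v → γ u v = β u v) ↔
    (∀ w : ℝ, SCThreshold E β w) := by
  exact ⟨fun hu w => dir_fwd E hout hin hconn β hβ hu w,
    fun hsc γ hγ he u v huv => dir_back E hout hin hconn β hsc γ hγ he u v huv⟩
end

section
/- For any initial graph function α on a strongly connected directed graph G, any fair infinite sequence of raising operations converges edgewise to a raising-balanced graph function that is the same for all fair sequences; symmetrically, any fair infinite sequence of lowering operations converges edgewise to a lowering-balanced graph function that is the same for all fair sequences. -/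
open Filter Topology

variable {V : Type*}

section Helpers

variable [Fintype V] {E : V → V → Prop}

lemma aux_bdd (p : V → Prop) (f : V → ℝ) : BddAbove {x : ℝ | ∃ w, p w ∧ x = f w} :=
  ((Set.finite_range f).subset (by rintro x ⟨w, -, rfl⟩; exact ⟨w, rfl⟩)).bddAbove

lemma aux_mem (p : V → Prop) (hp : ∃ w, p w) (f : V → ℝ) :
    ∃ w, p w ∧ sSup {x : ℝ | ∃ w, p w ∧ x = f w} = f w := by
  have hfin : {x : ℝ | ∃ w, p w ∧ x = f w}.Finite :=
    (Set.finite_range f).subset (by rintro x ⟨w, -, rfl⟩; exact ⟨w, rfl⟩)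
  obtain ⟨w, hw⟩ := hp
  exact Set.Nonempty.csSup_mem (s := {x : ℝ | ∃ w, p w ∧ x = f w}) ⟨f w, w, hw, rfl⟩ hfin

lemma le_outMax (α : V → V → ℝ) {v w : V} (h : E v w) : α v w ≤ outMax E α v :=
  le_csSup (aux_bdd (E v) (α v)) ⟨w, h, rfl⟩

lemma le_inMax (α : V → V → ℝ) {u v : V} (h : E u v) : α u v ≤ inMax E α v :=
  le_csSup (aux_bdd (fun u => E u v) (fun u => α u v)) ⟨u, h, rfl⟩

lemma ex_outMax (hout : ∀ v, ∃ w, E v w) (α : V → V → ℝ) (v : V) :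
    ∃ w, E v w ∧ outMax E α v = α v w := aux_mem (E v) (hout v) (α v)

lemma ex_inMax (hin : ∀ v, ∃ u, E u v) (α : V → V → ℝ) (v : V) :
    ∃ u, E u v ∧ inMax E α v = α u v :=
  aux_mem (fun u => E u v) (hin v) (fun u => α u v)

lemma outMax_le_add (hout : ∀ v, ∃ w, E v w) (α β : V → V → ℝ) (v : V) (c : ℝ)
    (h : ∀ w, E v w → α v w ≤ β v w + c) : outMax E α v ≤ outMax E β v + c := by
  obtain ⟨w, hw, he⟩ := ex_outMax hout α v
  have := h w hw
  have := le_outMax β hw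
  linarith

lemma inMax_le_add (hin : ∀ v, ∃ u, E u v) (α β : V → V → ℝ) (v : V) (c : ℝ)
    (h : ∀ u, E u v → α u v ≤ β u v + c) : inMax E α v ≤ inMax E β v + c := by
  obtain ⟨w, hw, he⟩ := ex_inMax hin α v
  have := h w hw
  have := le_inMax β hw
  linarith

lemma tendsto_inMax (hin : ∀ v, ∃ u, E u v) (a : ℕ → V → V → ℝ) (b : V → V → ℝ)
    (h : ∀ u v, Tendsto (fun t => a t u v) atTop (𝓝 (b u v))) (v : V) :
    Tendsto (fun t => inMax E (a t) v) atTop (𝓝 (inMax E b v)) := by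
  rw [Metric.tendsto_atTop]
  intro ε hε
  have h1 : ∀ᶠ t in atTop, ∀ u, |a t u v - b u v| < ε / 2 := by
    rw [eventually_all]
    intro u
    have := (Metric.tendsto_atTop.1 (h u v)) (ε / 2) (by linarith)
    simpa [Real.dist_eq] using this
  obtain ⟨N, hN⟩ := eventually_atTop.1 h1
  refine ⟨N, fun t ht => ?_⟩
  have h2 := inMax_le_add hin (a t) b v (ε / 2)
    (fun u _ => by have := abs_lt.1 (hN t ht u); linarith)
  have h3 := inMax_le_add hin b (a t) v (ε / 2)
    (fun u _ => by have := abs_lt.1 (hN t ht u); linarith)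
  rw [Real.dist_eq, abs_lt]
  constructor <;> linarith

lemma tendsto_outMax (hout : ∀ v, ∃ w, E v w) (a : ℕ → V → V → ℝ) (b : V → V → ℝ)
    (h : ∀ u v, Tendsto (fun t => a t u v) atTop (𝓝 (b u v))) (v : V) :
    Tendsto (fun t => outMax E (a t) v) atTop (𝓝 (outMax E b v)) :=
  tendsto_inMax (E := fun x y => E y x) hout (fun t x y => a t y x) (fun x y => b y x)
    (fun u v => h v u) v

/-- discounted eigenvector -/
lemma exists_discounted (hin : ∀ v, ∃ u, E u v) (α : V → V → ℝ) (β : ℝ) (h0 : 0 ≤ β)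
    (h1 : β < 1) : ∃ x : V → ℝ, ∀ v, inMax E (fun u v => α u v + β * x u) v = x v := by
  let T : (V → ℝ) → (V → ℝ) := fun x v => inMax E (fun u v => α u v + β * x u) v
  have key : ∀ x y : V → ℝ, ∀ v, T x v ≤ T y v + β * dist x y := by
    intro x y v
    apply inMax_le_add hin
    intro u _
    have h2 : dist (x u) (y u) ≤ dist x y := dist_le_pi_dist x y u
    rw [Real.dist_eq] at h2
    have h3 := (abs_le.1 h2).2
    have := mul_le_mul_of_nonneg_left h3 h0
    linarith
  have hT : ContractingWith ⟨β, h0⟩ T := by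
    refine ⟨by exact_mod_cast h1, LipschitzWith.of_dist_le_mul fun x y => ?_⟩
    rw [dist_pi_le_iff (by positivity)]
    intro v
    have h2 := key x y v
    have h3 := key y x v
    rw [dist_comm y x] at h3
    rw [Real.dist_eq, abs_le]
    change -(β * dist x y) ≤ _ ∧ _ ≤ β * dist x y
    constructor <;> linarith
  exact ⟨hT.fixedPoint T, fun v => congrFun hT.fixedPoint_isFixedPt v⟩

lemma exists_eigen [Nonempty V] (hin : ∀ v, ∃ u, E u v)
    (hconn : ∀ u v : V, Relation.ReflTransGen E u v) (α : V → V → ℝ) :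
    ∃ (y : V → ℝ) (l : ℝ), ∀ v, inMax E (fun u v => α u v + y u) v = y v + l := by
  obtain ⟨A, hA⟩ : ∃ A : ℝ, ∀ u v, |α u v| ≤ A := by
    obtain ⟨A, hA⟩ := (Set.finite_range (fun p : V × V => |α p.1 p.2|)).bddAbove
    exact ⟨A, fun u v => hA ⟨(u, v), rfl⟩⟩
  let v0 : V := Classical.arbitrary V
  have hA0 : 0 ≤ A := (abs_nonneg _).trans (hA v0 v0)
  -- path bound
  have hpath : ∀ u v, ∃ K : ℝ, 0 ≤ K ∧ ∀ x : V → ℝ,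
      (∀ a b, E a b → x a - x b ≤ 2 * A) → x u - x v ≤ K := by
    intro u v
    induction hconn u v with
    | refl => exact ⟨0, le_rfl, fun x _ => by simp⟩
    | tail _ hbc ih =>
      obtain ⟨K, hK0, hK⟩ := ih
      refine ⟨K + 2 * A, by linarith, fun x hx => ?_⟩
      have := hK x hx
      have := hx _ _ hbc
      linarith
  choose K hK0 hK using hpath
  obtain ⟨M, hM⟩ := (Set.finite_range (fun p : V × V => K p.1 p.2)).bddAbove
  have hM : ∀ u v, K u v ≤ M := fun u v => hM ⟨(u, v), rfl⟩
  let β : ℕ → ℝ := fun n => 1 - 1 / ((n : ℝ) + 1)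
  have hβ1 : ∀ n, β n < 1 := fun n => by
    have : (0 : ℝ) < 1 / ((n : ℝ) + 1) := by positivity
    simp only [β]; linarith
  have hβ0 : ∀ n, 0 ≤ β n := fun n => by
    have : 1 / ((n : ℝ) + 1) ≤ 1 := by
      rw [div_le_one (by positivity)]
      have : (0 : ℝ) ≤ n := by positivity
      linarith
    simp only [β]; linarith
  have hβl : Tendsto β atTop (𝓝 1) := by
    have := (tendsto_one_div_add_atTop_nhds_zero_nat (𝕜 := ℝ)).const_sub 1
    simpa [β] using this
  choose x hx using fun n => exists_discounted hin α (β n) (hβ0 n) (hβ1 n)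
  -- bound (1-β)|x| ≤ A
  have hxb : ∀ n v, |(1 - β n) * x n v| ≤ A := by
    intro n v
    obtain ⟨p, hp⟩ := Finite.exists_max (fun v => x n v)
    obtain ⟨q, hq⟩ := Finite.exists_min (fun v => x n v)
    have hup : (1 - β n) * x n p ≤ A := by
      obtain ⟨u, hu, he⟩ := ex_inMax hin (fun u v => α u v + β n * x n u) p
      rw [hx n p] at he
      have h1 := mul_le_mul_of_nonneg_left (hp u) (hβ0 n)
      have h2 := (abs_le.1 (hA u p)).2
      linarith
    have hlo : -A ≤ (1 - β n) * x n q := by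
      obtain ⟨u, hu, he⟩ := ex_inMax hin (fun u v => α u v + β n * x n u) q
      rw [hx n q] at he
      have h1 := mul_le_mul_of_nonneg_left (hq u) (hβ0 n)
      have h2 := (abs_le.1 (hA u q)).1
      linarith
    have h1 := mul_le_mul_of_nonneg_left (hp v) (sub_nonneg.2 (hβ1 n).le)
    have h2 := mul_le_mul_of_nonneg_left (hq v) (sub_nonneg.2 (hβ1 n).le)
    rw [abs_le]
    constructor <;> linarith
  have hedge : ∀ n a b, E a b → x n a - x n b ≤ 2 * A := by
    intro n a b hab
    have h1 := le_inMax (E := E) (fun u v => α u v + β n * x n u) hab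
    rw [hx n b] at h1
    have h2 := (abs_le.1 (hxb n a)).2
    have h3 := (abs_le.1 (hA a b)).1
    linarith
  have hosc : ∀ n u v, x n u - x n v ≤ M := fun n u v => (hK u v (x n) (hedge n)).trans (hM u v)
  let z : ℕ → (V → ℝ) × ℝ := fun n => (fun v => x n v - x n v0, (1 - β n) * x n v0)
  let S : Set ((V → ℝ) × ℝ) := (Set.univ.pi fun _ : V => Set.Icc (-M) M) ×ˢ Set.Icc (-A) A
  have hS : IsCompact S := (isCompact_univ_pi fun _ => isCompact_Icc).prod isCompact_Icc
  have hzS : ∀ n, z n ∈ S := by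
    intro n
    refine ⟨fun v _ => ⟨?_, hosc n v v0⟩, abs_le.1 (hxb n v0)⟩
    have := hosc n v0 v
    simp only [z]
    linarith
  obtain ⟨⟨y, l⟩, -, φ, hφ, hlim⟩ := hS.tendsto_subseq hzS
  have hy : ∀ v, Tendsto (fun k => x (φ k) v - x (φ k) v0) atTop (𝓝 (y v)) := by
    intro v
    exact (((continuous_apply v).comp continuous_fst).tendsto (y, l)).comp hlim
  have hl : Tendsto (fun k => (1 - β (φ k)) * x (φ k) v0) atTop (𝓝 l) :=
    (continuous_snd.tendsto (y, l)).comp hlim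
  have hb := hβl.comp hφ.tendsto_atTop
  refine ⟨y, l, fun v => ?_⟩
  have e1 : Tendsto (fun k => inMax E (fun u v => α u v + β (φ k) * (x (φ k) u - x (φ k) v0)) v)
      atTop (𝓝 (inMax E (fun u v => α u v + y u) v)) := by
    apply tendsto_inMax hin
    intro u v
    have := (hb.mul (hy u)).const_add (α u v)
    simpa using this
  have e2 := (hy v).add hl
  refine tendsto_nhds_unique e1 (e2.congr fun k => ?_)
  have h1 := inMax_le_add hin (fun u v => α u v + β (φ k) * (x (φ k) u - x (φ k) v0))
    (fun u v => α u v + β (φ k) * x (φ k) u) v (-(β (φ k) * x (φ k) v0))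
    (fun u _ => by linarith)
  have h2 := inMax_le_add hin (fun u v => α u v + β (φ k) * x (φ k) u)
    (fun u v => α u v + β (φ k) * (x (φ k) u - x (φ k) v0)) v (β (φ k) * x (φ k) v0)
    (fun u _ => by linarith)
  rw [hx] at h1 h2
  linarith

lemma exists_raising_balanced [Nonempty V] (hout : ∀ v, ∃ w, E v w) (hin : ∀ v, ∃ u, E u v)
    (hconn : ∀ u v : V, Relation.ReflTransGen E u v) (α : V → V → ℝ) :
    ∃ s : V → ℝ, (∀ v, 0 ≤ s v) ∧ ∀ v, rhoR E (alphaR α s) v = 0 := by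
  obtain ⟨y, l, hy⟩ := exists_eigen hin hconn α
  obtain ⟨c, hc⟩ := (Set.finite_range y).bddAbove
  refine ⟨fun v => c - y v, fun v => sub_nonneg.2 (hc ⟨v, rfl⟩), fun v => ?_⟩
  rw [rhoR, max_eq_left]
  obtain ⟨w, hw, he⟩ := ex_outMax hout (alphaR α (fun v => c - y v)) v
  have h1 := le_inMax (E := E) (fun u v => α u v + y u) hw
  rw [hy] at h1
  obtain ⟨u, hu, he2⟩ := ex_inMax hin (fun u v => α u v + y u) v
  rw [hy] at he2
  have h2 := le_inMax (E := E) (alphaR α (fun v => c - y v)) hu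
  rw [he]
  simp only [alphaR] at *
  linarith

lemma raise_le (hout : ∀ v, ∃ w, E v w) (hin : ∀ v, ∃ u, E u v) (α : V → V → ℝ)
    (r s : V → ℝ) (h : ∀ v, r v ≤ s v) (v : V) (hs : rhoR E (alphaR α s) v = 0) :
    r v + rhoR E (alphaR α r) v / 2 ≤ s v := by
  have h1 := outMax_le_add hout (alphaR α r) (alphaR α s) v (s v - r v) (fun w _ => by
    have := h w
    simp only [alphaR]; linarith)
  have h2 := inMax_le_add hin (alphaR α s) (alphaR α r) v (s v - r v) (fun w _ => by
    have := h w
    simp only [alphaR]; linarith)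
  have h3 : outMax E (alphaR α s) v - inMax E (alphaR α s) v ≤ 0 := by
    rw [← hs]; exact le_max_right _ _
  have h4 : rhoR E (alphaR α r) v ≤ 2 * (s v - r v) :=
    max_le (by have := h v; linarith) (by linarith)
  linarith

variable [DecidableEq V]

lemma raiseIter_eq (α : V → V → ℝ) (σ : ℕ → V) (t : ℕ) :
    raiseIter E α σ t = alphaR α (rvec E α σ t) := by
  induction t with
  | zero => funext u v; simp [raiseIter, alphaR, rvec]
  | succ t ih =>
    funext a b
    have hb : raiseIter E α σ t a b = alphaR α (rvec E α σ t) a b := by rw [ih]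
    simp only [raiseIter, raiseOp, rvec, alphaR] at hb ⊢
    by_cases h : 0 < rhoR E (raiseIter E α σ t) (σ t)
    · have h2 : rhoR E (raiseIter E α σ t) (σ t)
          = outMax E (raiseIter E α σ t) (σ t) - inMax E (raiseIter E α σ t) (σ t) := by
        rcases max_choice 0 (outMax E (raiseIter E α σ t) (σ t)
          - inMax E (raiseIter E α σ t) (σ t)) with h3 | h3
        · rw [rhoR, h3] at h; exact absurd h (lt_irrefl _)
        · exact h3
      rw [if_pos h, h2]
      simp only [balanceAt]
      rw [hb]
      ring
    · have h2 : rhoR E (raiseIter E α σ t) (σ t) = 0 :=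
        le_antisymm (not_lt.1 h) (le_max_left _ _)
      rw [if_neg h, h2, hb]
      simp

lemma rvec_le (hout : ∀ v, ∃ w, E v w) (hin : ∀ v, ∃ u, E u v) (α : V → V → ℝ) (σ : ℕ → V)
    (s : V → ℝ) (h0 : ∀ v, 0 ≤ s v) (hs : ∀ v, rhoR E (alphaR α s) v = 0) (t : ℕ) :
    ∀ v, rvec E α σ t v ≤ s v := by
  induction t with
  | zero => simpa [rvec] using h0
  | succ t ih =>
    intro v
    simp only [rvec]
    by_cases h : v = σ t
    · rw [if_pos h, raiseIter_eq, ← h]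
      exact raise_le hout hin α _ s ih v (hs v)
    · rw [if_neg h, add_zero]; exact ih v

lemma rvec_mono (α : V → V → ℝ) (σ : ℕ → V) (v : V) : Monotone (fun t => rvec E α σ t v) := by
  apply monotone_nat_of_le_succ
  intro t
  simp only [rvec]
  have : 0 ≤ rhoR E (raiseIter E α σ t) (σ t) := le_max_left _ _
  split_ifs <;> linarith

lemma rvec_lim [Nonempty V] (hout : ∀ v, ∃ w, E v w) (hin : ∀ v, ∃ u, E u v)
    (hconn : ∀ u v : V, Relation.ReflTransGen E u v) (α : V → V → ℝ) (σ : ℕ → V) (hσ : Fair σ) :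
    ∃ r : V → ℝ, (∀ v, 0 ≤ r v) ∧ (∀ v, rhoR E (alphaR α r) v = 0) ∧
      ∀ v, Tendsto (fun t => rvec E α σ t v) atTop (𝓝 (r v)) := by
  obtain ⟨s, hs0, hs⟩ := exists_raising_balanced hout hin hconn α
  have hlim : ∀ v, ∃ r, Tendsto (fun t => rvec E α σ t v) atTop (𝓝 r) := fun v =>
    ⟨_, tendsto_atTop_ciSup (rvec_mono α σ v)
      ⟨s v, by rintro _ ⟨t, rfl⟩; exact rvec_le hout hin α σ s hs0 hs t v⟩⟩
  choose r hr using hlim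
  refine ⟨r, fun v => ?_, fun v => ?_, hr⟩
  · exact (rvec_mono (E := E) α σ v).ge_of_tendsto (hr v) 0
  · have hA : ∀ u v, Tendsto (fun t => alphaR α (rvec E α σ t) u v) atTop
        (𝓝 (alphaR α r u v)) := fun u v => ((hr v).const_add _).sub (hr u)
    have h1 : Tendsto (fun t => rhoR E (alphaR α (rvec E α σ t)) v) atTop
        (𝓝 (rhoR E (alphaR α r) v)) :=
      tendsto_const_nhds.max ((tendsto_outMax hout _ _ hA v).sub (tendsto_inMax hin _ _ hA v))
    have h2 := h1.sub ((((hr v).comp (tendsto_add_atTop_nat 1)).sub (hr v)).const_mul 2)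
    have h3 := isClosed_singleton (x := (0 : ℝ)).mem_of_frequently_of_tendsto (b := atTop)
      (f := fun t => rhoR E (alphaR α (rvec E α σ t)) v -
        2 * (rvec E α σ (t + 1) v - rvec E α σ t v)) (by
        rw [frequently_atTop]
        intro N
        obtain ⟨t, ht, he⟩ := hσ v N
        refine ⟨t, ht, ?_⟩
        simp only [rvec, raiseIter_eq, he, if_true, Set.mem_singleton_iff]
        ring) h2
    simpa using h3

lemma raising_main [Nonempty V] (hout : ∀ v, ∃ w, E v w) (hin : ∀ v, ∃ u, E u v)
    (hconn : ∀ u v : V, Relation.ReflTransGen E u v) (α : V → V → ℝ) :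
    ∃ αR : V → V → ℝ, (∀ v, rhoR E αR v = 0) ∧
      ∀ σ : ℕ → V, Fair σ → ∀ u v, E u v →
        Tendsto (fun t => raiseIter E α σ t u v) atTop (nhds (αR u v)) := by
  by_cases hf : ∃ σ : ℕ → V, Fair σ
  · obtain ⟨σ, hσ⟩ := hf
    obtain ⟨r, hr0, hr, hrl⟩ := rvec_lim hout hin hconn α σ hσ
    refine ⟨alphaR α r, hr, fun τ hτ u v _ => ?_⟩
    obtain ⟨q, hq0, hq, hql⟩ := rvec_lim hout hin hconn α τ hτ
    have hqr : q = r := by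
      funext v
      apply le_antisymm
      · exact le_of_tendsto' (hql v) fun t => rvec_le hout hin α τ r hr0 hr t v
      · exact le_of_tendsto' (hrl v) fun t => rvec_le hout hin α σ q hq0 hq t v
    subst hqr
    simp only [raiseIter_eq]
    exact ((hql v).const_add _).sub (hql u)
  · obtain ⟨s, -, hs⟩ := exists_raising_balanced hout hin hconn α
    exact ⟨alphaR α s, hs, fun σ hσ => absurd ⟨σ, hσ⟩ hf⟩

lemma lowerIter_eq (α : V → V → ℝ) (σ : ℕ → V) (t : ℕ) :
    lowerIter E α σ t = fun u v => raiseIter (fun x y => E y x) (fun x y => α y x) σ t v u := by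
  induction t with
  | zero => rfl
  | succ t ih =>
    have ih' : raiseIter (fun x y => E y x) (fun x y => α y x) σ t
      = fun u v => lowerIter E α σ t v u := by rw [ih]
    simp only [lowerIter, raiseIter]
    rw [ih']
    generalize lowerIter E α σ t = γ
    have e : rhoR (fun x y => E y x) (fun u v => γ v u) (σ t) = rhoL E γ (σ t) := rfl
    have o : outMax (fun x y => E y x) (fun u v => γ v u) (σ t) = inMax E γ (σ t) := rfl
    have i : inMax (fun x y => E y x) (fun u v => γ v u) (σ t) = outMax E γ (σ t) := rfl
    funext a b
    simp only [lowerOp, raiseOp, e]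
    split_ifs
    · simp only [balanceAt, o, i]
      split_ifs <;> ring
    · rfl

end Helpers

/-- Any fair infinite sequence of raising operations converges
edgewise to a raising-balanced graph function that is the same for all fair
sequences; symmetrically for lowering operations. -/
theorem fair_raising_lowering_unique_limits
    [Fintype V] [Nonempty V] [DecidableEq V] (E : V → V → Prop)
    (hout : ∀ v, ∃ w, E v w) (hin : ∀ v, ∃ u, E u v)
    (hconn : ∀ u v : V, Relation.ReflTransGen E u v)
    (α : V → V → ℝ) :
    (∃ αR : V → V → ℝ, (∀ v, rhoR E αR v = 0) ∧
      ∀ σ : ℕ → V, Fair σ → ∀ u v, E u v →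
        Tendsto (fun t => raiseIter E α σ t u v) atTop (nhds (αR u v))) ∧
    (∃ αL : V → V → ℝ, (∀ v, rhoL E αL v = 0) ∧
      ∀ σ : ℕ → V, Fair σ → ∀ u v, E u v →
        Tendsto (fun t => lowerIter E α σ t u v) atTop (nhds (αL u v))) := by
  refine ⟨raising_main hout hin hconn α, ?_⟩
  obtain ⟨β, hβ, h⟩ := raising_main (E := fun x y => E y x) hin hout
    (fun u v => (Relation.reflTransGen_swap (r := E)).2 (hconn v u)) (fun x y => α y x)
  refine ⟨fun u v => β v u, hβ, fun σ hσ u v huv => ?_⟩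
  simp only [lowerIter_eq]
  exact h σ hσ v u huv
end

section
/- Applying a lowering operation at any vertex cannot increase the raising imbalance ρ_u^R of any vertex u; symmetrically, applying a raising operation at any vertex cannot increase the lowering imbalance ρ_u^L of any vertex u. -/
open Filter Topology

variable {V : Type*}

theorem aux_out_le [Finite V] (E : V → V → Prop) (α : V → V → ℝ) {a b : V} (h : E a b) :
    α a b ≤ outMax E α a := by
  refine le_csSup ?_ (show α a b ∈ {x : ℝ | ∃ w, E a w ∧ x = α a w} from ⟨b, h, rfl⟩)
  apply Set.Finite.bddAbove
  apply (Set.finite_range (fun w => α a w)).subset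
  rintro x ⟨w, _, rfl⟩
  exact ⟨w, rfl⟩

theorem aux_in_le [Finite V] (E : V → V → Prop) (α : V → V → ℝ) {a b : V} (h : E a b) :
    α a b ≤ inMax E α b := by
  refine le_csSup ?_ (show α a b ∈ {x : ℝ | ∃ w, E w b ∧ x = α w b} from ⟨a, h, rfl⟩)
  apply Set.Finite.bddAbove
  apply (Set.finite_range (fun w => α w b)).subset
  rintro x ⟨w, _, rfl⟩
  exact ⟨w, rfl⟩

theorem aux_out_ex [Finite V] (E : V → V → Prop) (α : V → V → ℝ) (a : V) (h : ∃ w, E a w) :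
    ∃ b, E a b ∧ outMax E α a = α a b := by
  have hf : Set.Finite {x : ℝ | ∃ w, E a w ∧ x = α a w} := by
    apply (Set.finite_range (fun w => α a w)).subset
    rintro x ⟨w, _, rfl⟩
    exact ⟨w, rfl⟩
  obtain ⟨w, hw⟩ := h
  have hn : Set.Nonempty {x : ℝ | ∃ w, E a w ∧ x = α a w} := ⟨_, w, hw, rfl⟩
  exact hn.csSup_mem hf

theorem aux_in_ex [Finite V] (E : V → V → Prop) (α : V → V → ℝ) (b : V) (h : ∃ u, E u b) :
    ∃ a, E a b ∧ inMax E α b = α a b := by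
  have hf : Set.Finite {x : ℝ | ∃ w, E w b ∧ x = α w b} := by
    apply (Set.finite_range (fun w => α w b)).subset
    rintro x ⟨w, _, rfl⟩
    exact ⟨w, rfl⟩
  obtain ⟨w, hw⟩ := h
  have hn : Set.Nonempty {x : ℝ | ∃ w, E w b ∧ x = α w b} := ⟨_, w, hw, rfl⟩
  exact hn.csSup_mem hf

/-- A lowering operation cannot increase any raising imbalance, and
symmetrically a raising operation cannot increase any lowering imbalance. -/
theorem lowering_raising_noninterference
    [Fintype V] [Nonempty V] [DecidableEq V] (E : V → V → Prop)
    (hout : ∀ v, ∃ w, E v w) (hin : ∀ v, ∃ u, E u v)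
    (hconn : ∀ u v : V, Relation.ReflTransGen E u v)
    (α : V → V → ℝ) (v u : V) :
    rhoR E (lowerOp E α v) u ≤ rhoR E α u ∧
    rhoL E (raiseOp E α v) u ≤ rhoL E α u := by
  obtain ⟨o, ho, hoe⟩ := aux_out_ex E α u (hout u)
  obtain ⟨i, hi, hie⟩ := aux_in_ex E α u (hin u)
  obtain ⟨o', ho', hoe'⟩ := aux_out_ex E (balanceAt E α v) u (hout u)
  obtain ⟨i', hi', hie'⟩ := aux_in_ex E (balanceAt E α v) u (hin u)
  have h1 := aux_out_le E α ho'
  have h2 := aux_in_le E α hi'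
  have h3 := aux_out_le E (balanceAt E α v) ho
  have h4 := aux_in_le E (balanceAt E α v) hi
  constructor
  · unfold lowerOp
    split_ifs with hpos
    · have hd : outMax E α v < inMax E α v := by
        by_contra hc
        simp only [rhoL, lt_max_iff, lt_irrefl, false_or] at hpos
        linarith
      unfold rhoR
      by_cases huv : u = v
      · subst huv
        have hne : i ≠ u := by
          rintro rfl
          have := aux_out_le E α hi
          linarith
        apply max_le (le_max_left _ _)
        apply le_trans _ (le_max_left _ _)
        rw [hoe']
        simp only [balanceAt, if_neg hne, if_true] at h4 ⊢
        split_ifs <;> linarith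
      · apply max_le_max le_rfl
        rw [hoe']
        simp only [balanceAt, if_neg huv] at h4 ⊢
        split_ifs at h4 ⊢ <;> linarith
    · exact le_rfl
  · unfold raiseOp
    split_ifs with hpos
    · have hd : inMax E α v < outMax E α v := by
        by_contra hc
        simp only [rhoR, lt_max_iff, lt_irrefl, false_or] at hpos
        linarith
      unfold rhoL
      by_cases huv : u = v
      · subst huv
        have hne : o ≠ u := by
          rintro rfl
          have := aux_in_le E α ho
          linarith
        apply max_le (le_max_left _ _)
        apply le_trans _ (le_max_left _ _)
        rw [hie']
        simp only [balanceAt, if_neg hne, if_true] at h3 ⊢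
        split_ifs <;> linarith
      · apply max_le_max le_rfl
        rw [hie']
        simp only [balanceAt, if_neg huv] at h3 ⊢
        split_ifs at h3 ⊢ <;> linarith
    · exact le_rfl
end

section
/- For any initial graph function α and any infinite sequence of raising operations, the sequence of raising vectors r(t) is coordinatewise non-decreasing and bounded above, and hence converges to a limit vector r* as t → ∞. -/
open Filter Topology

variable {V : Type*}

section Helpers

theorem aux_out_exists [Fintype V] (E : V → V → Prop) (α : V → V → ℝ) (v : V)
    (h : ∃ w, E v w) : ∃ w, E v w ∧ outMax E α v = α v w := by
  have hfin : {x : ℝ | ∃ w, E v w ∧ x = α v w}.Finite :=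
    (Set.finite_range (fun w => α v w)).subset (by rintro x ⟨w, _, rfl⟩; exact ⟨w, rfl⟩)
  have hne : {x : ℝ | ∃ w, E v w ∧ x = α v w}.Nonempty := by
    obtain ⟨w, hw⟩ := h
    exact ⟨_, w, hw, rfl⟩
  exact hne.csSup_mem hfin

theorem aux_in_exists [Fintype V] (E : V → V → Prop) (α : V → V → ℝ) (v : V)
    (h : ∃ u, E u v) : ∃ u, E u v ∧ inMax E α v = α u v := by
  have hfin : {x : ℝ | ∃ u, E u v ∧ x = α u v}.Finite :=
    (Set.finite_range (fun u => α u v)).subset (by rintro x ⟨w, _, rfl⟩; exact ⟨w, rfl⟩)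
  have hne : {x : ℝ | ∃ u, E u v ∧ x = α u v}.Nonempty := by
    obtain ⟨w, hw⟩ := h
    exact ⟨_, w, hw, rfl⟩
  exact hne.csSup_mem hfin

theorem aux_le_in [Fintype V] (E : V → V → Prop) (α : V → V → ℝ) (u v : V)
    (h : E u v) : α u v ≤ inMax E α v := by
  have hfin : {x : ℝ | ∃ u, E u v ∧ x = α u v}.Finite :=
    (Set.finite_range (fun u => α u v)).subset (by rintro x ⟨w, _, rfl⟩; exact ⟨w, rfl⟩)
  exact le_csSup hfin.bddAbove ⟨u, h, rfl⟩

theorem aux_iter [DecidableEq V] (E : V → V → Prop) (α : V → V → ℝ) (σ : ℕ → V) (t : ℕ) :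
    ∀ a b, raiseIter E α σ t a b = α a b + rvec E α σ t b - rvec E α σ t a := by
  induction t with
  | zero => intro a b; simp [raiseIter, rvec]
  | succ t ih =>
    intro a b
    simp only [raiseIter, rvec, raiseOp]
    by_cases h : 0 < rhoR E (raiseIter E α σ t) (σ t)
    · rw [if_pos h]
      have h2 : rhoR E (raiseIter E α σ t) (σ t)
          = outMax E (raiseIter E α σ t) (σ t) - inMax E (raiseIter E α σ t) (σ t) := by
        unfold rhoR at h ⊢
        rcases lt_max_iff.1 h with h | h
        · exact absurd h (lt_irrefl _)
        · exact max_eq_right h.le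
      simp only [balanceAt]
      rw [← h2, ih]
      ring
    · rw [if_neg h]
      have h2 : rhoR E (raiseIter E α σ t) (σ t) = 0 :=
        le_antisymm (not_lt.1 h) (le_max_left _ _)
      rw [h2, ih]
      simp

theorem aux_eig [Fintype V] [Nonempty V] (E : V → V → Prop) (hin : ∀ v, ∃ u, E u v)
    (α : V → V → ℝ) (l : ℝ) (h0 : 0 ≤ l) (h1 : l < 1) :
    ∃ x : V → ℝ, ∀ v, x v = inMax E (fun a _ => α a v + l * x a) v := by
  let T : (V → ℝ) → (V → ℝ) := fun x v => inMax E (fun a _ => α a v + l * x a) v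
  have key : ∀ x y v, T x v ≤ T y v + l * dist x y := by
    intro x y v
    obtain ⟨u, hu, he⟩ := aux_in_exists E (fun a _ => α a v + l * x a) v (hin v)
    have h2 := aux_le_in E (fun a _ => α a v + l * y a) u v hu
    have h3 : x u - y u ≤ dist x y :=
      (le_abs_self _).trans ((Real.dist_eq _ _).symm.le.trans (dist_le_pi_dist x y u))
    have h4 := mul_le_mul_of_nonneg_left h3 h0
    change inMax E (fun a _ => α a v + l * x a) v
      ≤ inMax E (fun a _ => α a v + l * y a) v + l * dist x y
    rw [he]
    linarith
  have hT : ContractingWith ⟨l, h0⟩ T := by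
    refine ⟨by exact_mod_cast h1, LipschitzWith.of_dist_le_mul ?_⟩
    intro x y
    refine (dist_pi_le_iff (by positivity)).2 ?_
    intro v
    rw [Real.dist_eq, abs_le]
    have h5 := key x y v
    have h6 := key y x v
    rw [dist_comm y x] at h6
    change -(l * dist x y) ≤ _ ∧ _ ≤ l * dist x y
    constructor <;> linarith
  refine ⟨hT.fixedPoint, fun v => ?_⟩
  exact (congrFun hT.fixedPoint_isFixedPt v).symm

theorem aux_span (E : V → V → Prop) (C : ℝ) (hC : 0 ≤ C) (u v : V)
    (h : Relation.ReflTransGen E u v) :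
    ∃ K : ℝ, 0 ≤ K ∧ ∀ x : V → ℝ, (∀ a b, E a b → x a - x b ≤ C) → x u - x v ≤ K := by
  induction h with
  | refl => exact ⟨0, le_refl _, fun x _ => by simp⟩
  | tail _ hbc ih =>
    obtain ⟨K, hK, ih⟩ := ih
    refine ⟨K + C, by linarith, fun x hx => ?_⟩
    have := ih x hx
    have := hx _ _ hbc
    linarith

theorem aux_super [Fintype V] [Nonempty V] (E : V → V → Prop) (hin : ∀ v, ∃ u, E u v)
    (hconn : ∀ u v : V, Relation.ReflTransGen E u v) (α : V → V → ℝ) :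
    ∃ B : ℝ, ∀ ε : ℝ, 0 < ε → ∃ p : V → ℝ, (∀ v, 0 ≤ p v ∧ p v ≤ B) ∧
      ∀ v, ∃ u, E u v ∧ ∀ w, E v w → α v w + p w - p v ≤ α u v + p v - p u + ε := by
  obtain ⟨A, hA0, hA⟩ : ∃ A : ℝ, 0 ≤ A ∧ ∀ u v, |α u v| ≤ A :=
    ⟨‖α‖, norm_nonneg _, fun u v => (norm_le_pi_norm (α u) v).trans (norm_le_pi_norm α u)⟩
  choose K hK0 hK using fun u v => aux_span E (2 * A) (by linarith) u v (hconn u v)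
  set S : ℝ := ∑ u, ∑ v, K u v with hS
  have hKS : ∀ u v, K u v ≤ S := fun u v =>
    (Finset.single_le_sum (f := fun v => K u v) (fun v _ => hK0 u v) (Finset.mem_univ v)).trans
      (Finset.single_le_sum (f := fun u => ∑ v, K u v)
        (fun u _ => Finset.sum_nonneg fun v _ => hK0 u v) (Finset.mem_univ u))
  have hS0 : 0 ≤ S := Finset.sum_nonneg fun u _ => Finset.sum_nonneg fun v _ => hK0 u v
  refine ⟨2 * S, fun ε hε => ?_⟩
  have hpos : 0 < ε + S := by linarith
  obtain ⟨x, hx⟩ := aux_eig E hin α (S / (ε + S)) (by positivity)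
    (by rw [div_lt_one hpos]; linarith)
  set l := S / (ε + S) with hl
  have hl0 : 0 ≤ l := by positivity
  have hl1 : l < 1 := by rw [hl, div_lt_one hpos]; linarith
  have hlS : (1 - l) * S ≤ ε := by
    have : l * (ε + S) = S := by rw [hl]; field_simp
    nlinarith
  have hge : ∀ u v, E u v → α u v + l * x u ≤ x v := by
    intro u v h
    rw [hx v]
    exact aux_le_in E (fun a _ => α a v + l * x a) u v h
  have hex : ∀ v, ∃ u, E u v ∧ x v = α u v + l * x u := by
    intro v
    obtain ⟨u, hu, he⟩ := aux_in_exists E (fun a _ => α a v + l * x a) v (hin v)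
    exact ⟨u, hu, (hx v).trans he⟩
  have hn : (1 - l) * ‖x‖ ≤ A := by
    have : ‖x‖ ≤ A + l * ‖x‖ := by
      refine (pi_norm_le_iff_of_nonneg (by positivity)).2 fun v => ?_
      obtain ⟨u, _, he⟩ := hex v
      rw [he]
      refine (norm_add_le _ _).trans (add_le_add (hA u v) ?_)
      rw [norm_mul, Real.norm_of_nonneg hl0]
      exact mul_le_mul_of_nonneg_left (norm_le_pi_norm x u) hl0
    linarith
  have hedge : ∀ a b, E a b → x a - x b ≤ 2 * A := by
    intro a b h
    have h1 := hge a b h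
    have h2 : x a ≤ ‖x‖ := (le_abs_self _).trans (norm_le_pi_norm x a)
    have h3 := mul_le_mul_of_nonneg_left h2 (by linarith : 0 ≤ 1 - l)
    have h4 := (abs_le.1 (hA a b)).1
    linarith
  have hsp : ∀ u v, x u - x v ≤ S := fun u v => (hK u v x hedge).trans (hKS u v)
  obtain ⟨v0⟩ := ‹Nonempty V›
  refine ⟨fun v => x v0 - x v + S, fun v => ⟨?_, ?_⟩, fun v => ?_⟩
  · have := hsp v v0
    linarith
  · have := hsp v0 v
    linarith
  · obtain ⟨u, hu, he⟩ := hex v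
    refine ⟨u, hu, fun w hw => ?_⟩
    have h1 := hge v w hw
    have h2 := mul_le_mul_of_nonneg_left (hsp v u) (by linarith : 0 ≤ 1 - l)
    simp only
    linarith

theorem aux_bound [Fintype V] [DecidableEq V] (E : V → V → Prop) (hout : ∀ v, ∃ w, E v w)
    (α : V → V → ℝ) (σ : ℕ → V) (ε : ℝ) (hε : 0 < ε) (p : V → ℝ) (hp : ∀ v, 0 ≤ p v)
    (hs : ∀ v, ∃ u, E u v ∧ ∀ w, E v w → α v w + p w - p v ≤ α u v + p v - p u + ε)
    (t : ℕ) : ∀ v, rvec E α σ t v ≤ p v + t * ε := by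
  induction t with
  | zero => intro v; simpa [rvec] using hp v
  | succ t ih =>
    intro v
    have h0 := ih v
    simp only [rvec]
    push_cast
    split_ifs with h
    · subst h
      obtain ⟨u, hu, hw⟩ := hs (σ t)
      obtain ⟨w, hvw, ho⟩ := aux_out_exists E (raiseIter E α σ t) (σ t) (hout _)
      have hi := aux_le_in E (raiseIter E α σ t) u (σ t) hu
      rw [aux_iter] at ho hi
      have := hw w hvw
      have := ih u
      have := ih w
      unfold rhoR
      rcases max_cases 0 (outMax E (raiseIter E α σ t) (σ t)
        - inMax E (raiseIter E α σ t) (σ t)) with ⟨h, _⟩ | ⟨h, _⟩ <;> rw [h] <;> linarith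
    · linarith

end Helpers

/-- For any initial graph function and any infinite sequence of
raising operations, the raising vectors `r(t)` are coordinatewise non-decreasing and
bounded above, and hence converge to a limit vector `r*`. -/
theorem raising_vectors_monotone_bounded_converge
    [Fintype V] [Nonempty V] [DecidableEq V] (E : V → V → Prop)
    (hout : ∀ v, ∃ w, E v w) (hin : ∀ v, ∃ u, E u v)
    (hconn : ∀ u v : V, Relation.ReflTransGen E u v)
    (α : V → V → ℝ) (σ : ℕ → V) :
    (∀ v, Monotone fun t => rvec E α σ t v) ∧
    (∃ B : ℝ, ∀ t v, rvec E α σ t v ≤ B) ∧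
    (∃ rstar : V → ℝ, ∀ v,
      Tendsto (fun t => rvec E α σ t v) atTop (nhds (rstar v))) := by
  have hmono : ∀ v, Monotone fun t => rvec E α σ t v := by
    intro v
    refine monotone_nat_of_le_succ fun t => ?_
    simp only [rvec]
    have : 0 ≤ rhoR E (raiseIter E α σ t) (σ t) := le_max_left _ _
    split_ifs <;> linarith
  obtain ⟨B, hB⟩ := aux_super E hin hconn α
  have hbd : ∀ t v, rvec E α σ t v ≤ B := by
    intro t v
    refine le_of_forall_pos_le_add fun δ hδ => ?_
    have ht : (0 : ℝ) < t + 1 := by positivity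
    obtain ⟨p, hp, hs⟩ := hB (δ / (t + 1)) (by positivity)
    have h1 := aux_bound E hout α σ _ (by positivity) p (fun v => (hp v).1) hs t v
    have h2 : (t : ℝ) * (δ / (t + 1)) ≤ δ := by
      rw [← mul_div_assoc, div_le_iff₀ ht]
      nlinarith
    have := (hp v).2
    linarith
  refine ⟨hmono, ⟨B, hbd⟩, fun v => ⨆ t, rvec E α σ t v, fun v => ?_⟩
  exact tendsto_atTop_ciSup (hmono v) ⟨B, by rintro _ ⟨t, rfl⟩; exact hbd t v⟩
end

section
/- Let r and s be raising vectors obtained from a common initial graph function α via (possibly different) finite sequences of raising operations, and suppose r ≤ s coordinatewise. Let r' and s' be the raising vectors obtained from r and s respectively after one additional raising operation performed at a common vertex v. Then r' ≤ s' coordinatewise. -/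
open Filter Topology

variable {V : Type*}

theorem raiseOp_apply_aux [DecidableEq V] (E : V → V → Prop) (α : V → V → ℝ) (v a b : V) :
    raiseOp E α v a b = α a b + (if b = v then rhoR E α v / 2 else 0)
      - (if a = v then rhoR E α v / 2 else 0) := by
  unfold raiseOp
  split_ifs with h h1 h2 h2 <;> simp_all [balanceAt, rhoR]
  all_goals first
    | linarith
    | rw [max_eq_right (by linarith)]
    | rw [max_eq_left (by linarith)]; simp

theorem raiseList_apply_aux [DecidableEq V] (E : V → V → Prop) (l : List V) :
    ∀ (α : V → V → ℝ) (a b : V),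
    raiseList E α l a b = α a b + rvecList E α l b - rvecList E α l a := by
  induction l with
  | nil => intro α a b; simp [raiseList, rvecList]
  | cons v l ih =>
    intro α a b
    simp only [raiseList, rvecList]
    rw [ih, raiseOp_apply_aux]
    ring

theorem rvecList_append_aux [DecidableEq V] (E : V → V → Prop) (l : List V) (v : V) :
    ∀ (α : V → V → ℝ) (u : V),
    rvecList E α (l ++ [v]) u
      = rvecList E α l u + (if u = v then rhoR E (raiseList E α l) v / 2 else 0) := by
  induction l with
  | nil => intro α u; simp [raiseList, rvecList]
  | cons w l ih =>
    intro α u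
    simp only [List.cons_append, raiseList, rvecList]
    rw [ih]
    ring

theorem sSup_le_aux [Finite V] (P : V → Prop) (hP : ∃ w, P w) (f g : V → ℝ) (d : ℝ)
    (h : ∀ w, P w → f w ≤ g w + d) :
    sSup {x : ℝ | ∃ w, P w ∧ x = f w} ≤ sSup {x : ℝ | ∃ w, P w ∧ x = g w} + d := by
  obtain ⟨w0, hw0⟩ := hP
  have hb : BddAbove {x : ℝ | ∃ w, P w ∧ x = g w} := by
    apply ((Set.finite_range g).subset _).bddAbove
    rintro x ⟨w, _, rfl⟩
    exact ⟨w, rfl⟩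
  refine csSup_le ⟨f w0, w0, hw0, rfl⟩ ?_
  rintro x ⟨w, hw, rfl⟩
  have := le_csSup hb (show g w ∈ _ from ⟨w, hw, rfl⟩)
  linarith [h w hw]

/-- If two raising vectors obtained from a common initial graph
function via finite sequences of raising operations satisfy `r ≤ s` coordinatewise,
then after one additional raising operation at a common vertex `v` the resulting
raising vectors still satisfy `r' ≤ s'` coordinatewise. -/
theorem raising_vector_monotonicity
    [Fintype V] [Nonempty V] [DecidableEq V] (E : V → V → Prop)
    (hout : ∀ v, ∃ w, E v w) (hin : ∀ v, ∃ u, E u v)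
    (hconn : ∀ u v : V, Relation.ReflTransGen E u v)
    (α : V → V → ℝ) (l1 l2 : List V) (v : V)
    (hrs : ∀ u, rvecList E α l1 u ≤ rvecList E α l2 u) :
    ∀ u, rvecList E α (l1 ++ [v]) u ≤ rvecList E α (l2 ++ [v]) u := by
  intro u
  rw [rvecList_append_aux, rvecList_append_aux]
  split_ifs with huv
  · subst huv
    have ho : outMax E (raiseList E α l1) u ≤ outMax E (raiseList E α l2) u
        + (rvecList E α l2 u - rvecList E α l1 u) := by
      apply sSup_le_aux (E u) (hout u)
      intro w _
      rw [raiseList_apply_aux, raiseList_apply_aux]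
      linarith [hrs w]
    have hi : inMax E (raiseList E α l2) u ≤ inMax E (raiseList E α l1) u
        + (rvecList E α l2 u - rvecList E α l1 u) := by
      apply sSup_le_aux (fun w => E w u) (hin u) (fun w => raiseList E α l2 w u)
        (fun w => raiseList E α l1 w u)
      intro w _
      simp only [raiseList_apply_aux]
      linarith [hrs w]
    have h0 := hrs u
    have h1 := le_max_left 0 (outMax E (raiseList E α l2) u - inMax E (raiseList E α l2) u)
    have h2 := le_max_right 0 (outMax E (raiseList E α l2) u - inMax E (raiseList E α l2) u)
    unfold rhoR
    rcases max_cases 0 (outMax E (raiseList E α l1) u - inMax E (raiseList E α l1) u) with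
      ⟨h, _⟩ | ⟨h, _⟩ <;> rw [h] <;> linarith
  · linarith [hrs u]
end

section
/- For any graph function α, h ≤ (n−1) · ∑_v ρ_v^R, where h = y_max − y_min is the difference between the maximum and minimum heights and the sum is over all n vertices. -/
open Filter Topology

variable {V : Type*}

section HeightHelpers

theorem hh_le_outMax [Fintype V] (E : V → V → Prop) (c : V → V → ℝ) {v w : V} (h : E v w) :
    c v w ≤ outMax E c v := by
  refine le_csSup ?_ ⟨w, h, rfl⟩
  refine ((Set.finite_range (fun w => c v w)).subset ?_).bddAbove
  rintro x ⟨w, _, rfl⟩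
  exact ⟨w, rfl⟩

theorem hh_le_inMax [Fintype V] (E : V → V → Prop) (c : V → V → ℝ) {u v : V} (h : E u v) :
    c u v ≤ inMax E c v := by
  refine le_csSup ?_ ⟨u, h, rfl⟩
  refine ((Set.finite_range (fun u => c u v)).subset ?_).bddAbove
  rintro x ⟨w, _, rfl⟩
  exact ⟨w, rfl⟩

theorem hh_outMax_att [Fintype V] (E : V → V → Prop) (c : V → V → ℝ) (v : V)
    (h : ∃ w, E v w) : ∃ w, E v w ∧ outMax E c v = c v w := by
  obtain ⟨w, hw⟩ := h
  have hf : ({x : ℝ | ∃ w, E v w ∧ x = c v w}).Finite := by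
    refine (Set.finite_range (fun w => c v w)).subset ?_
    rintro x ⟨w, _, rfl⟩
    exact ⟨w, rfl⟩
  have hne : ({x : ℝ | ∃ w, E v w ∧ x = c v w}).Nonempty := ⟨_, w, hw, rfl⟩
  exact hne.csSup_mem hf

theorem hh_inMax_att [Fintype V] (E : V → V → Prop) (c : V → V → ℝ) (v : V)
    (h : ∃ u, E u v) : ∃ u, E u v ∧ inMax E c v = c u v := by
  obtain ⟨w, hw⟩ := h
  have hf : ({x : ℝ | ∃ u, E u v ∧ x = c u v}).Finite := by
    refine (Set.finite_range (fun u => c u v)).subset ?_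
    rintro x ⟨w, _, rfl⟩
    exact ⟨w, rfl⟩
  have hne : ({x : ℝ | ∃ u, E u v ∧ x = c u v}).Nonempty := ⟨_, w, hw, rfl⟩
  exact hne.csSup_mem hf

/-- `α` shifted by `r` is raising-balanced. -/
def hhFeas (E : V → V → Prop) (α : V → V → ℝ) (r : V → ℝ) : Prop :=
  ∀ v w, E v w → ∃ u, E u v ∧ alphaR α r v w ≤ alphaR α r u v

theorem hh_rhoR_nonneg (E : V → V → Prop) (c : V → V → ℝ) (v : V) : 0 ≤ rhoR E c v :=
  le_max_left _ _

theorem hh_iter [DecidableEq V] (E : V → V → Prop) (α : V → V → ℝ) (σ : ℕ → V) (t : ℕ) :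
    raiseIter E α σ t = alphaR α (rvec E α σ t) := by
  induction t with
  | zero => funext a b; simp [raiseIter, alphaR, rvec]
  | succ t ih =>
    funext a b
    have hc : raiseIter E α σ t a b = alphaR α (rvec E α σ t) a b := by rw [ih]
    simp only [alphaR] at hc
    simp only [raiseIter, alphaR, rvec, raiseOp]
    by_cases hp : 0 < rhoR E (raiseIter E α σ t) (σ t)
    · have he : rhoR E (raiseIter E α σ t) (σ t) =
          outMax E (raiseIter E α σ t) (σ t) - inMax E (raiseIter E α σ t) (σ t) := by
        unfold rhoR at hp ⊢
        rcases max_choice 0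
          (outMax E (raiseIter E α σ t) (σ t) - inMax E (raiseIter E α σ t) (σ t)) with h | h
        · rw [h] at hp; exact absurd hp (lt_irrefl _)
        · exact h
      rw [if_pos hp, he]
      simp only [balanceAt]
      rw [hc]
      ring
    · have he : rhoR E (raiseIter E α σ t) (σ t) = 0 :=
        le_antisymm (not_lt.1 hp) (hh_rhoR_nonneg _ _ _)
      rw [if_neg hp, he, hc]
      simp

theorem hh_rvec_le [Fintype V] [DecidableEq V] (E : V → V → Prop)
    (hout : ∀ v, ∃ w, E v w)
    (α : V → V → ℝ) (σ : ℕ → V) (r : V → ℝ) (h0 : ∀ v, 0 ≤ r v) (hF : hhFeas E α r) (t : ℕ) :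
    ∀ v, rvec E α σ t v ≤ r v := by
  induction t with
  | zero => intro v; simpa [rvec] using h0 v
  | succ t ih =>
    intro a
    simp only [rvec]
    by_cases ha : a = σ t
    swap
    · simpa [ha] using ih a
    rw [if_pos ha, ← ha]
    have hiter := hh_iter E α σ t
    set c := raiseIter E α σ t with hcdef
    set q := rvec E α σ t with hq
    by_contra hcon
    push Not at hcon
    have hq1 := ih a
    have hpos : 0 < rhoR E c a := by linarith
    have he : rhoR E c a = outMax E c a - inMax E c a := by
      unfold rhoR at hpos ⊢
      rcases max_choice 0 (outMax E c a - inMax E c a) with h | h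
      · rw [h] at hpos; exact absurd hpos (lt_irrefl _)
      · exact h
    obtain ⟨w, hw, hwo⟩ := hh_outMax_att E c a (hout a)
    have hwa : w ≠ a := by
      rintro rfl
      have := hh_le_inMax E c hw
      linarith
    obtain ⟨u, hu, hle⟩ := hF a w hw
    have hin' := hh_le_inMax E c hu
    have hcu : c u a = α u a + q a - q u := by rw [hiter]; rfl
    have hcw : c a w = α a w + q w - q a := by rw [hiter]; rfl
    have hiw := ih w
    have hiu := ih u
    simp only [alphaR] at hle
    by_cases hua : u = a
    · subst hua
      linarith
    · linarith

theorem hh_rvec_nonneg [DecidableEq V] (E : V → V → Prop)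
    (α : V → V → ℝ) (σ : ℕ → V) (t : ℕ) : ∀ v, 0 ≤ rvec E α σ t v := by
  induction t with
  | zero => intro v; simp [rvec]
  | succ t ih =>
    intro v
    simp only [rvec]
    have h1 := ih v
    have h2 := hh_rhoR_nonneg E (raiseIter E α σ t) (σ t)
    split_ifs <;> linarith

theorem hh_exists_fair [Fintype V] [Nonempty V] : ∃ σ : ℕ → V, Fair σ := by
  classical
  have hc : 0 < Fintype.card V := Fintype.card_pos
  let e := Fintype.equivFin V
  refine ⟨fun t => e.symm ⟨t % Fintype.card V, Nat.mod_lt _ hc⟩, fun v N => ?_⟩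
  refine ⟨(e v : ℕ) + Fintype.card V * N, ?_, ?_⟩
  · have : 1 * N ≤ Fintype.card V * N := Nat.mul_le_mul_right N hc
    omega
  · have : (⟨((e v : ℕ) + Fintype.card V * N) % Fintype.card V, Nat.mod_lt _ hc⟩ :
        Fin (Fintype.card V)) = e v := by
      apply Fin.ext
      simp [Nat.mod_eq_of_lt (e v).isLt]
    show e.symm _ = v
    rw [this]
    simp

theorem hh_limit_feas [Fintype V] [DecidableEq V] (E : V → V → Prop)
    (hin : ∀ v, ∃ u, E u v) (α : V → V → ℝ) (σ : ℕ → V) (hσ : Fair σ) (r : V → ℝ)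
    (hr : ∀ v, Tendsto (fun t => rvec E α σ t v) atTop (nhds (r v))) : hhFeas E α r := by
  intro v w hvw
  by_contra hcon
  push Not at hcon
  have hcv : ∀ a b, Tendsto (fun t => alphaR α (rvec E α σ t) a b) atTop
      (nhds (alphaR α r a b)) := by
    intro a b
    simp only [alphaR]
    exact ((hr b).const_add _).sub (hr a)
  have hd : Tendsto (fun t => 2 * (rvec E α σ (t + 1) v - rvec E α σ t v)) atTop (nhds 0) := by
    have := (((hr v).comp (tendsto_add_atTop_nat 1)).sub (hr v)).const_mul 2
    simpa using this
  have hev : ∀ᶠ t in atTop, ∀ u, E u v →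
      2 * (rvec E α σ (t + 1) v - rvec E α σ t v) <
        alphaR α (rvec E α σ t) v w - alphaR α (rvec E α σ t) u v := by
    rw [eventually_all]
    intro u
    by_cases hu : E u v
    · have h1 := hd.eventually_lt ((hcv v w).sub (hcv u v)) (by have := hcon u hu; linarith)
      filter_upwards [h1] with t ht _ using ht
    · exact Eventually.of_forall fun t h => absurd h hu
  obtain ⟨N, hN⟩ := eventually_atTop.1 hev
  obtain ⟨t, hNt, htv⟩ := hσ v N
  have key := hN t hNt
  obtain ⟨u, hu, hum⟩ := hh_inMax_att E (alphaR α (rvec E α σ t)) v (hin v)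
  have k1 := key u hu
  have hstep : rvec E α σ (t + 1) v =
      rvec E α σ t v + rhoR E (alphaR α (rvec E α σ t)) v / 2 := by
    simp only [rvec]
    rw [if_pos htv.symm, htv, hh_iter]
  have h2 := hh_le_outMax E (alphaR α (rvec E α σ t)) hvw
  have h3 : outMax E (alphaR α (rvec E α σ t)) v - inMax E (alphaR α (rvec E α σ t)) v ≤
    rhoR E (alphaR α (rvec E α σ t)) v := le_max_right _ _
  linarith

theorem hh_gap [Fintype V] [DecidableEq V] (E : V → V → Prop)
    (hin : ∀ v, ∃ u, E u v)
    (α : V → V → ℝ) (r : V → ℝ) (hF : hhFeas E α r) (h0 : ∀ v, 0 ≤ r v)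
    (hmin : ∀ r' : V → ℝ, (∀ v, 0 ≤ r' v) → hhFeas E α r' → ∀ v, r v ≤ r' v)
    (T : Finset V) (hT : T.Nonempty) (s0 : V) (hs0 : s0 ∉ T) :
    ∃ u ∈ T, ∃ w, w ∉ T ∧ r u ≤ r w + ∑ v, rhoR E α v := by
  by_contra hcon
  push Not at hcon
  set D := ∑ v, rhoR E α v with hD
  have hρ := hh_rhoR_nonneg E α
  have hD0 : 0 ≤ D := Finset.sum_nonneg fun v _ => hρ v
  set β := alphaR α r with hβ
  have hβe : ∀ a b, β a b = α a b + r b - r a := fun a b => rfl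
  set L : V → ℝ := inMax E β with hL
  have hLin : ∀ u v, E u v → β u v ≤ L v := fun u v h => hh_le_inMax E β h
  have hLout : ∀ v w, E v w → β v w ≤ L v := by
    intro v w h
    obtain ⟨u, hu, hle⟩ := hF v w h
    exact hle.trans (hLin u v hu)
  have hLatt : ∀ v, ∃ u, E u v ∧ L v = β u v := fun v => hh_inMax_att E β v (hin v)
  have hrT : ∀ v ∈ T, 0 < r v := by
    intro v hv
    have := hcon v hv s0 hs0
    have := h0 s0
    linarith
  obtain ⟨vx, hvx, hvxmax⟩ := T.exists_max_image L hT
  set x := L vx with hx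
  -- the descending chain
  have chain : ∀ v ∈ T, ∀ w, E v w →
      α v w ≤ x + ∑ u ∈ Finset.univ.filter (fun u => r v ≤ r u), rhoR E α u := by
    by_contra hbad
    push Not at hbad
    classical
    have hBne : (T.filter (fun v => ∃ w, E v w ∧
      x + ∑ u ∈ Finset.univ.filter (fun u => r v ≤ r u), rhoR E α u < α v w)).Nonempty := by
      obtain ⟨v, hv, w, hw, hlt⟩ := hbad
      exact ⟨v, by simp only [Finset.mem_filter]; exact ⟨hv, w, hw, hlt⟩⟩
    obtain ⟨v, hvB, hvmax⟩ := Finset.exists_max_image _ r hBne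
    simp only [Finset.mem_filter] at hvB hvmax
    obtain ⟨hvT, w, hw, hlt⟩ := hvB
    obtain ⟨u, hu, hum⟩ := hh_inMax_att E α v (hin v)
    have h1 := hh_le_outMax E α hw
    have h2 : outMax E α v - inMax E α v ≤ rhoR E α v := le_max_right _ _
    have hsplit : rhoR E α v + ∑ u ∈ Finset.univ.filter (fun u => r v < r u), rhoR E α u ≤
        ∑ u ∈ Finset.univ.filter (fun u => r v ≤ r u), rhoR E α u := by
      rw [← Finset.sum_insert (s := Finset.univ.filter (fun u => r v < r u)) (a := v) (by simp)]
      apply Finset.sum_le_sum_of_subset_of_nonneg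
      · intro z hz
        simp only [Finset.mem_insert, Finset.mem_filter, Finset.mem_univ, true_and] at hz ⊢
        rcases hz with rfl | hz
        · exact le_rfl
        · exact hz.le
      · intro i _ _; exact hρ i
    have hnn : 0 ≤ ∑ u ∈ Finset.univ.filter (fun u => r v < r u), rhoR E α u :=
      Finset.sum_nonneg fun i _ => hρ i
    have hαu : x + ∑ u ∈ Finset.univ.filter (fun u => r v < r u), rhoR E α u < α u v := by
      linarith
    have h3 := hLin u v hu
    have h4 := hvxmax v hvT
    have h5 := hβe u v
    have hlt' : r v < r u := by linarith
    have huT : u ∈ T := by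
      by_contra hn
      have := hcon v hvT u hn
      linarith
    have hmono : ∑ z ∈ Finset.univ.filter (fun z => r u ≤ r z), rhoR E α z ≤
        ∑ z ∈ Finset.univ.filter (fun z => r v < r z), rhoR E α z := by
      apply Finset.sum_le_sum_of_subset_of_nonneg
      · intro z hz
        simp only [Finset.mem_filter, Finset.mem_univ, true_and] at hz ⊢
        exact hlt'.trans_le hz
      · intro i _ _; exact hρ i
    have := hvmax u ⟨huT, v, hu, by linarith⟩
    linarith
  -- closedness
  have hcl : ∀ v ∈ T, L v = x → ∀ w, E v w → β v w = x → w ∈ T ∧ L w = x := by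
    intro v hv _ w hw hbw
    have hwT : w ∈ T := by
      by_contra hn
      have h1 := hcon v hv w hn
      have h2 := chain v hv w hw
      have h3 : ∑ u ∈ Finset.univ.filter (fun u => r v ≤ r u), rhoR E α u ≤ D :=
        Finset.sum_le_sum_of_subset_of_nonneg (Finset.filter_subset _ _) fun i _ _ => hρ i
      have h4 := hβe v w
      linarith
    refine ⟨hwT, le_antisymm (hvxmax w hwT) ?_⟩
    rw [← hbw]
    exact hLin v w hw
  -- minimal closed set
  let Good : Finset V → Prop := fun U => U.Nonempty ∧ (∀ v ∈ U, v ∈ T ∧ L v = x) ∧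
    ∀ v ∈ U, ∀ w, E v w → β v w = x → w ∈ U
  have hGex : ∃ n, ∃ U, Good U ∧ U.card = n := by
    classical
    refine ⟨_, T.filter (fun v => L v = x), ⟨⟨vx, by simp [hvx, hx]⟩, ?_, ?_⟩, rfl⟩
    · intro v hv; simpa using hv
    · intro v hv w hw hb
      simp only [Finset.mem_filter] at hv ⊢
      exact hcl v hv.1 hv.2 w hw hb
  classical
  obtain ⟨U, hUG, hUc⟩ := Nat.find_spec hGex
  have hUmin : ∀ U', Good U' → U.card ≤ U'.card := by
    intro U' h
    rw [hUc]
    exact Nat.find_min' hGex ⟨U', h, rfl⟩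
  obtain ⟨hUne, hUT, hUcl⟩ := hUG
  have hdich : (∀ w ∈ U, ∃ v ∈ U, E v w ∧ β v w = x) ∨ (∀ v ∈ U, ∀ w, E v w → β v w ≠ x) := by
    set U' := U.filter (fun w => ∃ v ∈ U, E v w ∧ β v w = x) with hU'
    rcases U'.eq_empty_or_nonempty with he | hne
    · right
      intro v hv w hw hb
      have : w ∈ U' := by
        simp only [hU', Finset.mem_filter]
        exact ⟨hUcl v hv w hw hb, v, hv, hw, hb⟩
      simp [he] at this
    · left
      have hG : Good U' := by
        refine ⟨hne, ?_, ?_⟩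
        · intro v hv
          exact hUT v (Finset.mem_filter.1 hv).1
        · intro v hv w hw hb
          have hvU := (Finset.mem_filter.1 hv).1
          exact Finset.mem_filter.2 ⟨hUcl v hvU w hw hb, v, hvU, hw, hb⟩
      have heq : U' = U := Finset.eq_of_subset_of_card_le (Finset.filter_subset _ _) (hUmin _ hG)
      intro w hw
      rw [← heq] at hw
      exact (Finset.mem_filter.1 hw).2
  -- epsilon
  have hε : ∃ ε : ℝ, 0 < ε ∧ (∀ v, v ∈ U → ε < r v) ∧
      ∀ v w, β v w < x → β v w + 2 * ε < x := by
    have e1 : ∀ᶠ ε in 𝓝[>] (0 : ℝ), 0 < ε := self_mem_nhdsWithin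
    have e2 : ∀ᶠ ε in 𝓝[>] (0 : ℝ), ∀ v, v ∈ U → ε < r v := by
      rw [eventually_all]
      intro v
      by_cases hv : v ∈ U
      · have := hrT v (hUT v hv).1
        filter_upwards [mem_nhdsWithin_of_mem_nhds (Iio_mem_nhds this)] with ε h _ using h
      · exact Eventually.of_forall fun _ h => absurd h hv
    have e3 : ∀ᶠ ε in 𝓝[>] (0 : ℝ), ∀ v w, β v w < x → β v w + 2 * ε < x := by
      rw [eventually_all]
      intro v
      rw [eventually_all]
      intro w
      by_cases hv : β v w < x
      · have : 0 < (x - β v w) / 2 := by linarith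
        filter_upwards [mem_nhdsWithin_of_mem_nhds (Iio_mem_nhds this)] with ε h _
        have h : ε < (x - β v w) / 2 := h
        linarith
      · exact Eventually.of_forall fun _ h => absurd h hv
    obtain ⟨ε, h1, h2, h3⟩ := (e1.and (e2.and e3)).exists
    exact ⟨ε, h1, h2, h3⟩
  obtain ⟨ε, hε0, hεr, hεx⟩ := hε
  let r' : V → ℝ := fun v => r v - if v ∈ U then ε else 0
  have hr'0 : ∀ v, 0 ≤ r' v := by
    intro v
    simp only [r']
    split_ifs with h
    · have := hεr v h; linarith
    · simpa using h0 v
  have hr'e : ∀ a b, alphaR α r' a b =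
      β a b - (if b ∈ U then ε else 0) + (if a ∈ U then ε else 0) := by
    intro a b
    simp only [alphaR, r', hβe]
    ring
  have hr'F : hhFeas E α r' := by
    intro v w hw
    by_cases hv : v ∈ U
    · have hLv := (hUT v hv).2
      have hbw := hLout v w hw
      rw [hLv] at hbw
      rcases hdich with hA | hB
      · obtain ⟨u, hu, hE, hb⟩ := hA v hv
        refine ⟨u, hE, ?_⟩
        rw [hr'e, hr'e, if_pos hv, if_pos hu]
        by_cases hwU : w ∈ U
        · rw [if_pos hwU]; linarith
        · rw [if_neg hwU]
          have hne : β v w ≠ x := fun h => hwU (hUcl v hv w hw h)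
          have := hεx v w (lt_of_le_of_ne hbw hne)
          linarith
      · obtain ⟨u, hE, hb⟩ := hLatt v
        refine ⟨u, hE, ?_⟩
        rw [hr'e, hr'e, if_pos hv]
        have := hεx v w (lt_of_le_of_ne hbw (hB v hv w hw))
        split_ifs <;> linarith
    · obtain ⟨u, hu, hle⟩ := hF v w hw
      refine ⟨u, hu, ?_⟩
      have hle : β v w ≤ β u v := hle
      rw [hr'e, hr'e, if_neg hv]
      split_ifs <;> linarith
  obtain ⟨v, hv⟩ := hUne
  have := hmin r' hr'0 hr'F v
  simp only [r', if_pos hv] at this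
  linarith

theorem hh_spread [Fintype V] [DecidableEq V] (r : V → ℝ) (D : ℝ) (hD : 0 ≤ D)
    (hgap : ∀ T : Finset V, T.Nonempty → ∀ s, s ∉ T → ∃ u ∈ T, ∃ w, w ∉ T ∧ r u ≤ r w + D)
    (m : V) (a : V) : r a ≤ r m + ((Fintype.card V : ℝ) - 1) * D := by
  classical
  have key : ∀ k : ℕ, k + 1 ≤ Fintype.card V →
      k + 1 ≤ (Finset.univ.filter (fun v => r v ≤ r m + k * D)).card := by
    intro k
    induction k with
    | zero =>
      intro _
      have : m ∈ Finset.univ.filter (fun v => r v ≤ r m + ((0 : ℕ) : ℝ) * D) := by simp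
      exact Finset.card_pos.2 ⟨m, this⟩
    | succ k ih =>
      intro hk
      have ih := ih (by omega)
      set A := Finset.univ.filter (fun v => r v ≤ r m + k * D) with hA
      have hsub : A ⊆ Finset.univ.filter (fun v => r v ≤ r m + ((k + 1 : ℕ) : ℝ) * D) := by
        intro z hz
        simp only [hA, Finset.mem_filter, Finset.mem_univ, true_and] at hz ⊢
        push_cast
        linarith
      by_cases hAu : A = Finset.univ
      · have := Finset.card_le_card hsub
        rw [hAu, Finset.card_univ] at this
        omega
      · have hne : (Aᶜ).Nonempty := by
          rw [Finset.nonempty_iff_ne_empty]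
          simpa using hAu
        have hmA : m ∈ A := by
          simp only [hA, Finset.mem_filter, Finset.mem_univ, true_and]
          have : 0 ≤ (k : ℝ) * D := by positivity
          linarith
        obtain ⟨u, hu, w, hw, hle⟩ := hgap Aᶜ hne m (by simpa using hmA)
        have hu' : u ∉ A := by simpa using hu
        have hw' : w ∈ A := by simpa using hw
        have hss : insert u A ⊆
            Finset.univ.filter (fun v => r v ≤ r m + ((k + 1 : ℕ) : ℝ) * D) := by
          intro z hz
          rcases Finset.mem_insert.1 hz with rfl | hz
          · simp only [hA, Finset.mem_filter, Finset.mem_univ, true_and] at hw' ⊢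
            push_cast
            linarith
          · exact hsub hz
        have := Finset.card_le_card hss
        rw [Finset.card_insert_of_notMem hu'] at this
        omega
  have hpos : 0 < Fintype.card V := Fintype.card_pos_iff.2 ⟨m⟩
  have h := key (Fintype.card V - 1) (by omega)
  have heq : Finset.univ.filter
      (fun v => r v ≤ r m + ((Fintype.card V - 1 : ℕ) : ℝ) * D) = Finset.univ := by
    apply Finset.eq_univ_of_card
    apply le_antisymm (Finset.card_le_univ _)
    omega
  have ha : a ∈ Finset.univ.filter
      (fun v => r v ≤ r m + ((Fintype.card V - 1 : ℕ) : ℝ) * D) := by rw [heq]; simp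
  simp only [Finset.mem_filter, Finset.mem_univ, true_and] at ha
  rw [Nat.cast_sub (by omega)] at ha
  simpa using ha

end HeightHelpers

/-- `h ≤ (n−1) · ∑_v ρ_v^R`, where `h = y_max − y_min`. -/
theorem height_spread_le_total_imbalance
    [Fintype V] [Nonempty V] [DecidableEq V] (E : V → V → Prop)
    (hout : ∀ v, ∃ w, E v w) (hin : ∀ v, ∃ u, E u v)
    (hconn : ∀ u v : V, Relation.ReflTransGen E u v)
    (α : V → V → ℝ) (rstar : V → ℝ)
    (hrstar : ∀ σ : ℕ → V, Fair σ → ∀ v,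
      Tendsto (fun t => rvec E α σ t v) atTop (nhds (rstar v))) :
    Finset.univ.sup' Finset.univ_nonempty (height rstar) -
        Finset.univ.inf' Finset.univ_nonempty (height rstar) ≤
      ((Fintype.card V : ℝ) - 1) * ∑ v, rhoR E α v := by
  obtain ⟨σ, hσ⟩ := hh_exists_fair (V := V)
  have hlim := hrstar σ hσ
  have hF := hh_limit_feas E hin α σ hσ rstar hlim
  have h0 : ∀ v, 0 ≤ rstar v := fun v =>
    ge_of_tendsto' (hlim v) fun t => hh_rvec_nonneg E α σ t v
  have hmin : ∀ r' : V → ℝ, (∀ v, 0 ≤ r' v) → hhFeas E α r' → ∀ v, rstar v ≤ r' v :=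
    fun r' h1 h2 v => le_of_tendsto' (hlim v) fun t => hh_rvec_le E hout α σ r' h1 h2 t v
  have hD : 0 ≤ ∑ v, rhoR E α v := Finset.sum_nonneg fun v _ => hh_rhoR_nonneg E α v
  obtain ⟨m, _, hm⟩ := Finset.exists_mem_eq_sup' Finset.univ_nonempty (height rstar)
  obtain ⟨a, _, ha⟩ := Finset.exists_mem_eq_inf' Finset.univ_nonempty (height rstar)
  have := hh_spread rstar _ hD
    (fun T hT s hs => hh_gap E hin α rstar hF h0 hmin T hT s hs) m a
  rw [hm, ha]
  simp only [height]
  linarith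
end

section
/- For any graph function α and any vertex v, the momentum satisfies m_v ≤ max{0, max over edges (u,v) of G with y_u < y_v of (m_u + ρ_u^R + x_u − x_v)}. -/
open Filter Topology

variable {V : Type*}

/-- `m_v ≤ max{0, max over edges (u,v) with y_u < y_v of
(m_u + ρ_u^R + x_u − x_v)}`. -/
theorem momentum_local_bound
    [Fintype V] [Nonempty V] [DecidableEq V] (E : V → V → Prop)
    (hout : ∀ v, ∃ w, E v w) (hin : ∀ v, ∃ u, E u v)
    (hconn : ∀ u v : V, Relation.ReflTransGen E u v)
    (α : V → V → ℝ) (rstar : V → ℝ)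
    (hrstar : ∀ σ : ℕ → V, Fair σ → ∀ v,
      Tendsto (fun t => rvec E α σ t v) atTop (nhds (rstar v)))
    (v : V) :
    momentum E α rstar v ≤
      max 0 (sSup {c : ℝ | ∃ u, E u v ∧ height rstar u < height rstar v ∧
        c = momentum E α rstar u + rhoR E α u +
            level E α rstar u - level E α rstar v}) := by
  classical
  have fin : ∀ (P : V → Prop) (f : V → ℝ), BddAbove {c : ℝ | ∃ u, P u ∧ c = f u} := by
    intro P f
    apply Set.Finite.bddAbove
    apply (Set.finite_range f).subset
    rintro c ⟨u, _, rfl⟩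
    exact ⟨u, rfl⟩
  unfold momentum
  apply csSup_le
  · obtain ⟨u, hu⟩ := hin v
    exact ⟨_, u, hu, rfl⟩
  rintro c ⟨u, hu, rfl⟩
  by_cases hy : height rstar u < height rstar v
  · apply le_max_of_le_right
    have hb : BddAbove {c : ℝ | ∃ u, E u v ∧ height rstar u < height rstar v ∧
        c = momentum E α rstar u + rhoR E α u +
            level E α rstar u - level E α rstar v} := by
      have := fin (fun u => E u v ∧ height rstar u < height rstar v)
        (fun u => momentum E α rstar u + rhoR E α u +
            level E α rstar u - level E α rstar v)
      simpa only [and_assoc] using this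
    refine le_trans ?_ (le_csSup hb ⟨u, hu, hy, rfl⟩)
    have h1 : α u v ≤ outMax E α u := le_csSup (fin (E u) (α u)) ⟨v, hu, rfl⟩
    have h2 : outMax E α u - inMax E α u ≤ rhoR E α u := le_max_right _ _
    have h3 : inMax E α u ≤ momentum E α rstar u + level E α rstar u := by
      apply csSup_le
      · obtain ⟨w, hw⟩ := hin u
        exact ⟨_, w, hw, rfl⟩
      rintro c ⟨w, hw, rfl⟩
      have : α w u - level E α rstar u ≤ momentum E α rstar u :=
        le_csSup (fin (fun w => E w u) (fun w => α w u - level E α rstar u)) ⟨w, hw, rfl⟩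
      linarith
    unfold momentum at h3
    linarith
  · apply le_max_of_le_left
    have h1 : alphaR α rstar u v ≤ level E α rstar v :=
      le_csSup (fin (fun w => E w v) (fun w => alphaR α rstar w v)) ⟨u, hu, rfl⟩
    unfold alphaR at h1
    unfold height at hy
    linarith
end
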